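/- arXiv:1102.4199 — 2 statements merged into one kernel-verified Lean document; each statement's English description precedes it below -/
import Mathlib

section
/- Suppose κ is even. Let (λ_n)_{n∈ℕ} be a strictly increasing enumeration of all eigenvalues of the Neumann problem (γ₀ = γ₁ = 0) for the equation −y'' − λρy = 0 with weight ρ the distributional derivative of the Cantor-type self-similar function P with parameters κ, a, b, and let (μ_n)_{n∈ℕ} be a strictly increasing enumeration of all eigenvalues of the problem with γ₀ = 0, γ₁ = 2a/b for the same equation. Then for every n ∈ ℕ one has λ_{κn + κ/2} = (κ/a)·μ_n. -/
open MeasureTheory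

/-- A continuous function `f : [0,1] → ℝ` is a *self-similar function of Cantor type*
with parameters `κ`, `a`, `b` if `f 0 = 0`, `f 1 = 1`, `f` is constant on each interval
`(α_{2k-1}, α_{2k})` for `k ∈ {1, …, κ-1}` (where `α_{2k} = k(a+b)`, `α_{2k+1} = α_{2k} + a`),
and for each `k ∈ {0, …, κ-1}` the function `x ↦ κ·f(α_{2k} + a·x)` differs from `f`
by an additive constant. -/
def CantorType (κ : ℕ) (a b : ℝ) (f : ℝ → ℝ) : Prop :=
  ContinuousOn f (Set.Icc 0 1) ∧ f 0 = 0 ∧ f 1 = 1 ∧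
  (∀ k : ℕ, 1 ≤ k → k ≤ κ - 1 →
    ∃ c : ℝ, ∀ x ∈ Set.Ioo (((k : ℝ) - 1) * (a + b) + a) ((k : ℝ) * (a + b)), f x = c) ∧
  (∀ k : ℕ, k ≤ κ - 1 → ∃ c : ℝ, ∀ x ∈ Set.Icc (0 : ℝ) 1,
    (κ : ℝ) * f ((k : ℝ) * (a + b) + a * x) = f x + c)

/-- `lam` is an eigenvalue of the boundary value problem
`-y'' - λ ρ y = 0`, `y⁽¹⁾(0) - γ₀ y(0) = 0`, `y⁽¹⁾(1) + γ₁ y(1) = 0`, where `ρ` is the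
distributional derivative of the function whose Lebesgue–Stieltjes measure is `μ`:
there are continuous `y, g : [0,1] → ℝ`, `y` not identically zero, with
`y(x) = y(0) + ∫₀ˣ g`, `g(x) = g(0) - λ ∫_{[0,x]} y dμ`, and
`g(0) - γ₀ y(0) = 0`, `g(1) + γ₁ y(1) = 0`. -/
def IsEigen (μ : Measure ℝ) (γ₀ γ₁ lam : ℝ) : Prop :=
  ∃ y g : ℝ → ℝ, ContinuousOn y (Set.Icc 0 1) ∧ ContinuousOn g (Set.Icc 0 1) ∧
    (∃ x ∈ Set.Icc (0 : ℝ) 1, y x ≠ 0) ∧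
    (∀ x ∈ Set.Icc (0 : ℝ) 1, y x = y 0 + ∫ t in (0 : ℝ)..x, g t) ∧
    (∀ x ∈ Set.Icc (0 : ℝ) 1, g x = g 0 - lam * ∫ t in Set.Icc (0 : ℝ) x, y t ∂μ) ∧
    g 0 - γ₀ * y 0 = 0 ∧ g 1 + γ₁ * y 1 = 0


namespace Cant

abbrev E := C(Set.Icc (0:ℝ) 1, ℝ)

noncomputable def ext (f : E) : ℝ → ℝ := Set.IccExtend (zero_le_one' ℝ) f

lemma ext_cont (f : E) : Continuous (ext f) := f.continuous.Icc_extend'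

lemma ext_le (f : E) (x : ℝ) : |ext f x| ≤ ‖f‖ := by
  unfold ext Set.IccExtend
  exact f.norm_coe_le_norm _

lemma ext_of_mem (f : E) {x : ℝ} (hx : x ∈ Set.Icc (0:ℝ) 1) : ext f x = f ⟨x, hx⟩ :=
  Set.IccExtend_of_mem _ _ hx

lemma ext_int (μ : Measure ℝ) [IsFiniteMeasure μ] (f : E) : Integrable (ext f) μ :=
  Integrable.of_bound (ext_cont f).aestronglyMeasurable ‖f‖ (Filter.Eventually.of_forall (ext_le f))

lemma ext_H_cont (μ : Measure ℝ) [IsFiniteMeasure μ] [NullSingletonClass μ] (f : E) :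
    Continuous (fun t => ∫ s in (0:ℝ)..t, ext f s ∂μ) :=
  intervalIntegral.continuous_primitive (fun _ _ => (ext_int μ f).intervalIntegrable) 0

noncomputable def Vfun (μ : Measure ℝ) [IsFiniteMeasure μ] [NullSingletonClass μ] (f : E) : E where
  toFun x := ∫ t in (0:ℝ)..x, ∫ s in (0:ℝ)..t, ext f s ∂μ
  continuous_toFun := by
    have := intervalIntegral.continuous_primitive (μ := volume)
      (fun a b => (ext_H_cont μ f).intervalIntegrable a b) 0
    exact this.comp continuous_subtype_val

lemma Vbound (μ : Measure ℝ) [IsProbabilityMeasure μ] [NullSingletonClass μ] (f : E) (M : ℝ) (hM : 0 ≤ M) (k : ℕ)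
    (h : ∀ x, |f x| ≤ M * ((x:ℝ) ^ k / k.factorial)) (x : Set.Icc (0:ℝ) 1) :
    |Vfun μ f x| ≤ M * ((x:ℝ) ^ (k+1) / (k+1).factorial) := by
  have hH : ∀ t ∈ Set.Icc (0:ℝ) 1, |∫ s in (0:ℝ)..t, ext f s ∂μ| ≤ M * (t ^ k / k.factorial) := by
    intro t ht
    rw [intervalIntegral.integral_of_le ht.1]
    have := norm_setIntegral_le_of_norm_le_const (μ := μ) (s := Set.Ioc 0 t) (f := ext f)
      (C := M * (t ^ k / k.factorial)) (measure_lt_top _ _) (by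
        intro s hs
        have hs' : s ∈ Set.Icc (0:ℝ) 1 := ⟨hs.1.le, hs.2.trans ht.2⟩
        rw [ext_of_mem f hs']
        refine (h _).trans ?_
        have := hs.1.le
        have := hs.2
        simp only
        gcongr)
    refine this.trans ?_
    have h1 : μ.real (Set.Ioc 0 t) ≤ 1 := measureReal_le_one
    have h2 : 0 ≤ M * (t ^ k / k.factorial) := by have := ht.1; positivity
    nlinarith
  have hx := x.2
  show |∫ t in (0:ℝ)..x, ∫ s in (0:ℝ)..t, ext f s ∂μ| ≤ _
  have h1 := intervalIntegral.norm_integral_le_of_norm_le (μ := volume) hx.1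
    (f := fun t => ∫ s in (0:ℝ)..t, ext f s ∂μ) (g := fun t => M * (t ^ k / k.factorial))
    (Filter.Eventually.of_forall (fun t ht => hH t ⟨ht.1.le, ht.2.trans hx.2⟩))
    (Continuous.intervalIntegrable (by fun_prop) _ _)
  refine h1.trans (le_of_eq ?_)
  rw [intervalIntegral.integral_const_mul, intervalIntegral.integral_div, integral_pow,
    Nat.factorial_succ]
  push_cast
  have : (k.factorial : ℝ) ≠ 0 := by positivity
  have : (k:ℝ) + 1 ≠ 0 := by positivity
  field_simp
  simp

noncomputable def V (μ : Measure ℝ) [IsProbabilityMeasure μ] [NullSingletonClass μ] : E →L[ℝ] E :=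
  LinearMap.mkContinuous
    { toFun := Vfun μ
      map_add' := by
        intro f g
        ext x
        show (∫ t in (0:ℝ)..x, ∫ s in (0:ℝ)..t, ext (f+g) s ∂μ) = (∫ t in (0:ℝ)..x, ∫ s in (0:ℝ)..t, ext f s ∂μ) + ∫ t in (0:ℝ)..x, ∫ s in (0:ℝ)..t, ext g s ∂μ
        rw [← intervalIntegral.integral_add ((ext_H_cont μ f).intervalIntegrable _ _)
          ((ext_H_cont μ g).intervalIntegrable _ _)]
        congr 1; ext t
        rw [← intervalIntegral.integral_add ((ext_int μ f).intervalIntegrable)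
          ((ext_int μ g).intervalIntegrable)]
        rfl
      map_smul' := by
        intro c f
        ext x
        show (∫ t in (0:ℝ)..x, ∫ s in (0:ℝ)..t, ext (c • f) s ∂μ) = c * (∫ t in (0:ℝ)..x, ∫ s in (0:ℝ)..t, ext f s ∂μ)
        rw [← intervalIntegral.integral_const_mul]
        congr 1; ext t
        rw [← intervalIntegral.integral_const_mul]
        rfl } 1 (by
      intro f
      rw [one_mul]
      refine (ContinuousMap.norm_le _ (norm_nonneg _)).2 fun x => ?_
      have := Vbound μ f ‖f‖ (norm_nonneg _) 0 (by intro x; simpa using f.norm_coe_le_norm x) x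
      refine this.trans ?_
      have := x.2.2
      simp
      exact mul_le_of_le_one_right (norm_nonneg _) this)

lemma V_apply (μ : Measure ℝ) [IsProbabilityMeasure μ] [NullSingletonClass μ] (f : E) (x : Set.Icc (0:ℝ) 1) :
    V μ f x = ∫ t in (0:ℝ)..x, ∫ s in (0:ℝ)..t, ext f s ∂μ := rfl

lemma Vpow (μ : Measure ℝ) [IsProbabilityMeasure μ] [NullSingletonClass μ] (f : E) (k : ℕ) (x : Set.Icc (0:ℝ) 1) :
    |((V μ)^k) f x| ≤ ‖f‖ * ((x:ℝ) ^ k / k.factorial) := by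
  induction k generalizing x with
  | zero => simpa using f.norm_coe_le_norm x
  | succ k ih =>
    rw [pow_succ']
    exact Vbound μ _ ‖f‖ (norm_nonneg _) k ih x

lemma abstract_resolvent {X : Type*} [NormedAddCommGroup X] [NormedSpace ℝ X] [CompleteSpace X]
    (W : X →L[ℝ] X) (hW : ∀ k : ℕ, ∀ f, ‖(W^k) f‖ ≤ ‖f‖ / k.factorial) :
    ∃ R : ℝ → X →L[ℝ] X, Continuous R ∧ (∀ ν f, R ν f + ν • W (R ν f) = f) ∧
      ∀ (ν : ℝ) f, f + ν • W f = 0 → f = 0 := by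
  have hu : ∀ ν : ℝ, IsUnit (1 + ν • W) := by
    intro ν
    have ht := FloorSemiring.tendsto_pow_div_factorial_atTop |ν|
    obtain ⟨n, hn⟩ := (ht.eventually (gt_mem_nhds (zero_lt_one))).exists
    have hWn : ‖W^n‖ ≤ 1 / n.factorial := by
      refine ContinuousLinearMap.opNorm_le_bound _ (by positivity) fun f => ?_
      refine (hW n f).trans (le_of_eq (by ring))
    have h1 : ‖((-ν) • W)^n‖ < 1 := by
      rw [smul_pow, norm_smul]
      simp only [norm_pow, Real.norm_eq_abs, abs_neg]
      calc |ν|^n * ‖W ^ n‖ ≤ |ν|^n * (1 / n.factorial) := by gcongr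
        _ < 1 := by rw [mul_one_div]; exact hn
    have h2 := isUnit_one_sub_of_norm_lt_one h1
    rw [← mul_neg_geom_sum ((-ν) • W) n, neg_smul, sub_neg_eq_add] at h2
    refine (Commute.isUnit_mul_iff ?_).1 h2 |>.1
    refine Commute.sum_right _ _ _ fun i _ => ?_
    refine Commute.pow_right ?_ _
    refine Commute.neg_right ?_
    exact (Commute.one_left _).add_left (Commute.refl _)
  refine ⟨fun ν => Ring.inverse (1 + ν • W), ?_, ?_, ?_⟩
  · rw [continuous_iff_continuousAt]
    intro ν
    have h := NormedRing.inverse_continuousAt (hu ν).unit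
    rw [IsUnit.unit_spec] at h
    exact ContinuousAt.comp (f := fun ν : ℝ => 1 + ν • W) h (by fun_prop)
  · intro ν f
    have := Ring.mul_inverse_cancel _ (hu ν)
    have := congrArg (fun L : X →L[ℝ] X => L f) this
    simpa using this
  · intro ν f h
    have := Ring.inverse_mul_cancel _ (hu ν)
    have := congrArg (fun L : X →L[ℝ] X => L f) this
    simp [h] at this
    exact this.symm

lemma exists_resolvent (μ : Measure ℝ) [IsProbabilityMeasure μ] [NullSingletonClass μ] :
    ∃ R : ℝ → E →L[ℝ] E, Continuous R ∧ (∀ ν f, R ν f + ν • V μ (R ν f) = f) ∧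
      ∀ (ν : ℝ) f, f + ν • V μ f = 0 → f = 0 := by
  refine abstract_resolvent (V μ) fun k f => ?_
  refine (ContinuousMap.norm_le _ (by positivity)).2 fun x => ?_
  refine (Vpow μ f k x).trans ?_
  rw [mul_div_assoc']
  gcongr
  refine mul_le_of_le_one_right (norm_nonneg _) ?_
  exact pow_le_one₀ x.2.1 x.2.2

end Cant


namespace Cant

structure Sol (μ : Measure ℝ) (ν : ℝ) (y g : ℝ → ℝ) : Prop where
  cy : ContinuousOn y (Set.Icc 0 1)
  cg : ContinuousOn g (Set.Icc 0 1)
  hy : ∀ x ∈ Set.Icc (0 : ℝ) 1, y x = y 0 + ∫ t in (0 : ℝ)..x, g t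
  hg : ∀ x ∈ Set.Icc (0 : ℝ) 1, g x = g 0 - ν * ∫ t in (0 : ℝ)..x, y t ∂μ

lemma intOn (μ : Measure ℝ) [IsFiniteMeasure μ] {h : ℝ → ℝ} (hh : ContinuousOn h (Set.Icc 0 1))
    {x y : ℝ} (hx : x ∈ Set.Icc (0:ℝ) 1) (hy : y ∈ Set.Icc (0:ℝ) 1) : IntervalIntegrable h μ x y :=
  (hh.mono (Set.uIcc_subset_Icc hx hy)).intervalIntegrable

lemma Sol.comb {μ : Measure ℝ} [IsFiniteMeasure μ] {ν : ℝ} {y g u w : ℝ → ℝ} (h : Sol μ ν y g)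
    (h' : Sol μ ν u w) (c d : ℝ) : Sol μ ν (fun x => c * y x + d * u x) (fun x => c * g x + d * w x) where
  cy := (continuousOn_const.mul h.cy).add (continuousOn_const.mul h'.cy)
  cg := (continuousOn_const.mul h.cg).add (continuousOn_const.mul h'.cg)
  hy := by
    intro x hx
    have h0 : (0:ℝ) ∈ Set.Icc (0:ℝ) 1 := by simp
    have i1 : IntervalIntegrable g volume 0 x :=
      (h.cg.mono (Set.uIcc_subset_Icc h0 hx)).intervalIntegrable
    have i2 : IntervalIntegrable w volume 0 x :=
      (h'.cg.mono (Set.uIcc_subset_Icc h0 hx)).intervalIntegrable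
    rw [intervalIntegral.integral_add (i1.const_mul c) (i2.const_mul d),
      intervalIntegral.integral_const_mul, intervalIntegral.integral_const_mul, h.hy x hx, h'.hy x hx]
    ring
  hg := by
    intro x hx
    have h0 : (0:ℝ) ∈ Set.Icc (0:ℝ) 1 := by simp
    rw [intervalIntegral.integral_add ((intOn μ h.cy h0 hx).const_mul c) ((intOn μ h'.cy h0 hx).const_mul d),
      intervalIntegral.integral_const_mul, intervalIntegral.integral_const_mul, h.hg x hx, h'.hg x hx]
    ring

lemma Sol.zero {μ : Measure ℝ} [IsProbabilityMeasure μ] [NullSingletonClass μ] {ν : ℝ} {y g : ℝ → ℝ}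
    (h : Sol μ ν y g) (hy0 : y 0 = 0) (hg0 : g 0 = 0) :
    ∀ x ∈ Set.Icc (0:ℝ) 1, y x = 0 ∧ g x = 0 := by
  obtain ⟨_, _, _, huniq⟩ := exists_resolvent μ
  let f : E := ⟨fun x => y x, continuousOn_iff_continuous_domRestrict.1 h.cy⟩
  have hH : ∀ x ∈ Set.Icc (0:ℝ) 1, g x = - (ν * ∫ s in (0:ℝ)..x, ext f s ∂μ) := by
    intro x hx
    rw [h.hg x hx, hg0, zero_sub]
    congr 2
    refine intervalIntegral.integral_congr fun s hs => ?_
    rw [Set.uIcc_of_le hx.1] at hs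
    rw [ext_of_mem f ⟨hs.1, hs.2.trans hx.2⟩]
    rfl
  have hf : f = 0 := by
    refine huniq ν f ?_
    ext x
    show y x + ν * (V μ f x) = 0
    rw [V_apply, h.hy x x.2, hy0, zero_add, ← intervalIntegral.integral_const_mul]
    have : ∫ t in (0:ℝ)..x, g t = ∫ t in (0:ℝ)..x, -(ν * ∫ s in (0:ℝ)..t, ext f s ∂μ) := by
      refine intervalIntegral.integral_congr fun s hs => ?_
      rw [Set.uIcc_of_le x.2.1] at hs
      exact hH s ⟨hs.1, hs.2.trans x.2.2⟩
    rw [this, intervalIntegral.integral_neg]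
    ring
  intro x hx
  refine ⟨congrArg (fun f : E => f ⟨x, hx⟩) hf, ?_⟩
  rw [hH x hx, hf]
  have : ext (0:E) = 0 := by ext x; rfl
  simp [this]

lemma exists_sol (μ : Measure ℝ) [IsProbabilityMeasure μ] [NullSingletonClass μ] (c d : ℝ) :
    ∃ y g : ℝ → ℝ → ℝ, (∀ ν, Sol μ ν (y ν) (g ν) ∧ y ν 0 = c ∧ g ν 0 = d) ∧
      ∀ h : ℝ → ℝ, ContinuousOn h (Set.Icc 0 1) →
        Continuous (fun ν => ∫ x in (0:ℝ)..1, h x * y ν x ∂μ) := by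
  obtain ⟨R, hRc, hR, -⟩ := exists_resolvent μ
  let f₀ : E := ⟨fun x => c + d * x, by fun_prop⟩
  refine ⟨fun ν => ext (R ν f₀), fun ν x => d - ν * ∫ t in (0:ℝ)..x, ext (R ν f₀) t ∂μ, ?_, ?_⟩
  · intro ν
    have key : ∀ x ∈ Set.Icc (0:ℝ) 1, ext (R ν f₀) x = c + d * x - ν * ∫ t in (0:ℝ)..x, ∫ s in (0:ℝ)..t, ext (R ν f₀) s ∂μ := by
      intro x hx
      rw [ext_of_mem _ hx]
      have := congrArg (fun f : E => f ⟨x, hx⟩) (hR ν f₀)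
      have h2 : R ν f₀ ⟨x, hx⟩ + ν * (V μ (R ν f₀) ⟨x, hx⟩) = c + d * x := this
      rw [V_apply] at h2
      simp only at h2
      linarith
    have k0 : ext (R ν f₀) 0 = c := by
      have := key 0 (by simp)
      simpa using this
    refine ⟨⟨(ext_cont _).continuousOn, ?_, ?_, ?_⟩, k0, by simp⟩
    · exact (continuous_const.sub (continuous_const.mul (ext_H_cont μ _))).continuousOn
    · intro x hx
      beta_reduce
      rw [key x hx, k0, intervalIntegral.integral_sub (intervalIntegrable_const)
        (((ext_H_cont μ _).intervalIntegrable _ _).const_mul ν),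
        intervalIntegral.integral_const_mul, intervalIntegral.integral_const]
      simp only [smul_eq_mul]
      ring
    · intro x hx
      simp
  · intro h hh
    obtain ⟨K, hK⟩ := isCompact_Icc.exists_bound_of_continuousOn hh
    rw [continuous_iff_continuousAt]
    intro ν₀
    have hRf : Continuous (fun ν => R ν f₀) := by fun_prop
    refine intervalIntegral.continuousAt_of_dominated_interval (bound := fun _ => |K| * (‖R ν₀ f₀‖ + 1)) ?_ ?_ (by simp) ?_
    · refine Filter.Eventually.of_forall fun ν => ?_
      rw [Set.uIoc_of_le zero_le_one]
      exact ((hh.mul (ext_cont (R ν f₀)).continuousOn).mono Set.Ioc_subset_Icc_self).aestronglyMeasurable measurableSet_Ioc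
    · have := (hRf.norm.continuousAt (x := ν₀)).eventually (gt_mem_nhds (lt_add_one _))
      filter_upwards [this] with ν hν
      refine Filter.Eventually.of_forall fun x hx => ?_
      rw [Set.uIoc_of_le zero_le_one] at hx
      rw [norm_mul]
      refine mul_le_mul ((hK x ⟨hx.1.le, hx.2⟩).trans (le_abs_self _)) ((ext_le _ x).trans hν.le) (norm_nonneg _) (abs_nonneg _)
    · refine Filter.Eventually.of_forall fun x hx => ?_
      refine Continuous.continuousAt (continuous_const.mul ?_)
      show Continuous (fun ν => (R ν f₀) (Set.projIcc 0 1 _ x))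
      exact (continuous_eval_const (F := E) _).comp hRf

lemma ibp (μ : Measure ℝ) [IsFiniteMeasure μ] [NullSingletonClass μ] {y g h : ℝ → ℝ}
    (cg : ContinuousOn g (Set.Icc 0 1)) (ch : ContinuousOn h (Set.Icc 0 1))
    (hy : ∀ x ∈ Set.Icc (0 : ℝ) 1, y x = y 0 + ∫ t in (0 : ℝ)..x, g t) :
    (∫ x in (0:ℝ)..1, g x * ∫ t in (0:ℝ)..x, h t ∂μ) + ∫ t in (0:ℝ)..1, y t * h t ∂μ
      = y 1 * ∫ t in (0:ℝ)..1, h t ∂μ := by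
  have h0 : (0:ℝ) ∈ Set.Icc (0:ℝ) 1 := by simp
  have h1 : (1:ℝ) ∈ Set.Icc (0:ℝ) 1 := by simp
  have cy : ContinuousOn y (Set.Icc 0 1) := by
    have : ContinuousOn (fun x => y 0 + ∫ t in (0 : ℝ)..x, g t) (Set.Icc 0 1) := by
      refine continuousOn_const.add ?_
      have := intervalIntegral.continuousOn_primitive_interval (μ := volume) (f := g) (a := 0) (b := 1) (by
        rw [Set.uIcc_of_le zero_le_one]; exact cg.integrableOn_Icc)
      rwa [Set.uIcc_of_le zero_le_one] at this
    exact this.congr hy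
  let F : ℝ → ℝ → ℝ := fun x t => (Set.indicator {p : ℝ × ℝ | p.2 ≤ p.1} (fun p => g p.1 * h p.2)) (x, t)
  have hF : Integrable (Function.uncurry F) ((volume.restrict (Set.Ioc 0 1)).prod (μ.restrict (Set.Ioc 0 1))) := by
    have hg' : Integrable g (volume.restrict (Set.Ioc 0 1)) := cg.integrableOn_Icc.mono_set Set.Ioc_subset_Icc_self
    have hh' : Integrable h (μ.restrict (Set.Ioc 0 1)) := ch.integrableOn_Icc.mono_set Set.Ioc_subset_Icc_self
    exact (hg'.mul_prod hh').indicator (measurableSet_le measurable_snd measurable_fst)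
  have hsw := integral_integral_swap hF
  have e1 : ∫ x in (0:ℝ)..1, g x * ∫ t in (0:ℝ)..x, h t ∂μ = ∫ x in Set.Ioc (0:ℝ) 1, ∫ t in Set.Ioc (0:ℝ) 1, F x t ∂μ := by
    rw [intervalIntegral.integral_of_le zero_le_one]
    refine setIntegral_congr_fun measurableSet_Ioc fun x hx => ?_
    rw [intervalIntegral.integral_of_le hx.1.le, ← integral_const_mul]
    have : ∀ t, F x t = (Set.Iic x).indicator (fun t => g x * h t) t := fun t => by
      simp only [F, Set.indicator, Set.mem_ofPred_eq, Set.mem_Iic]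
    simp only [this]
    rw [setIntegral_indicator measurableSet_Iic, Set.Ioc_inter_Iic, min_eq_right hx.2]
  have e2 : ∫ t in Set.Ioc (0:ℝ) 1, ∫ x in Set.Ioc (0:ℝ) 1, F x t ∂volume ∂μ = ∫ t in (0:ℝ)..1, (y 1 - y t) * h t ∂μ := by
    rw [intervalIntegral.integral_of_le zero_le_one]
    refine setIntegral_congr_fun measurableSet_Ioc fun t ht => ?_
    have : ∀ x, F x t = (Set.Ici t).indicator (fun x => g x * h t) x := fun x => by
      simp only [F, Set.indicator, Set.mem_ofPred_eq, Set.mem_Ici]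
    simp only [this]
    have hs : Set.Ioc (0:ℝ) 1 ∩ Set.Ici t = Set.Icc t 1 := by
      ext x; simp only [Set.mem_inter_iff, Set.mem_Ioc, Set.mem_Ici, Set.mem_Icc]
      have := ht.1
      constructor
      · rintro ⟨⟨_, h2⟩, h3⟩; exact ⟨h3, h2⟩
      · rintro ⟨h3, h2⟩; exact ⟨⟨by linarith, h2⟩, h3⟩
    have ht' : t ∈ Set.Icc (0:ℝ) 1 := ⟨ht.1.le, ht.2⟩
    rw [setIntegral_indicator measurableSet_Ici, hs, integral_mul_const, integral_Icc_eq_integral_Ioc,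
      ← intervalIntegral.integral_of_le ht.2, hy 1 h1, hy t ht',
      ← intervalIntegral.integral_add_adjacent_intervals (b := t)
       ((cg.mono (Set.uIcc_subset_Icc h0 ht')).intervalIntegrable)
       ((cg.mono (Set.uIcc_subset_Icc ht' h1)).intervalIntegrable)]
    ring
  rw [e1, hsw, e2]
  have : ∀ t, (y 1 - y t) * h t = y 1 * h t - y t * h t := fun t => by ring
  simp only [this]
  rw [intervalIntegral.integral_sub ((intOn μ ch h0 h1).const_mul _) (intOn μ (h := fun t => y t * h t) (cy.mul ch) h0 h1),
    intervalIntegral.integral_const_mul]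
  ring

lemma Sol.green {μ : Measure ℝ} [IsFiniteMeasure μ] [NullSingletonClass μ] {ν ν' : ℝ} {y g u w : ℝ → ℝ}
    (h : Sol μ ν y g) (h' : Sol μ ν' u w) :
    y 1 * w 1 - y 0 * w 0 = (∫ x in (0:ℝ)..1, g x * w x) - ν' * ∫ x in (0:ℝ)..1, y x * u x ∂μ := by
  have h0 : (0:ℝ) ∈ Set.Icc (0:ℝ) 1 := by simp
  have h1 : (1:ℝ) ∈ Set.Icc (0:ℝ) 1 := by simp
  have k := ibp μ h.cg h'.cy h.hy
  have e : ∫ x in (0:ℝ)..1, g x * w x = w 0 * (∫ x in (0:ℝ)..1, g x) - ν' * ∫ x in (0:ℝ)..1, g x * ∫ t in (0:ℝ)..x, u t ∂μ := by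
    rw [← intervalIntegral.integral_const_mul, ← intervalIntegral.integral_const_mul, ← intervalIntegral.integral_sub]
    · refine intervalIntegral.integral_congr fun x hx => ?_
      rw [Set.uIcc_of_le zero_le_one] at hx
      rw [h'.hg x hx]; ring
    · exact ((h.cg.mono (Set.uIcc_subset_Icc h0 h1)).intervalIntegrable).const_mul _
    · refine ContinuousOn.intervalIntegrable ?_
      rw [Set.uIcc_of_le zero_le_one]
      refine continuousOn_const.mul (h.cg.mul ?_)
      have := intervalIntegral.continuousOn_primitive_interval (μ := μ) (f := u) (a := 0) (b := 1) (by
        rw [Set.uIcc_of_le zero_le_one]; exact h'.cy.integrableOn_Icc)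
      rwa [Set.uIcc_of_le zero_le_one] at this
  rw [e, h'.hg 1 h1]
  have := h.hy 1 h1
  linear_combination ν' * k + w 0 * this

lemma Sol.wronsk {μ : Measure ℝ} [IsFiniteMeasure μ] [NullSingletonClass μ] {ν ν' : ℝ} {y g u w : ℝ → ℝ}
    (h : Sol μ ν y g) (h' : Sol μ ν' u w) :
    (y 1 * w 1 - g 1 * u 1) - (y 0 * w 0 - g 0 * u 0) = (ν - ν') * ∫ x in (0:ℝ)..1, y x * u x ∂μ := by
  have k1 := h.green h'
  have k2 := h'.green h
  have e1 : ∫ x in (0:ℝ)..1, w x * g x = ∫ x in (0:ℝ)..1, g x * w x := by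
    congr 1; ext x; ring
  have e2 : ∫ x in (0:ℝ)..1, u x * y x ∂μ = ∫ x in (0:ℝ)..1, y x * u x ∂μ := by
    congr 1; ext x; ring
  rw [e1, e2] at k2
  linear_combination k1 - k2

end Cant


namespace Cant

structure Fund (μ : Measure ℝ) (A B C D I J K : ℝ → ℝ) : Prop where
  det : ∀ ν, A ν * D ν - B ν * C ν = 1
  tr : ∀ ν y g, Sol μ ν y g → y 1 = A ν * y 0 + B ν * g 0 ∧ g 1 = C ν * y 0 + D ν * g 0
  ex : ∀ ν c d, ∃ y g, Sol μ ν y g ∧ y 0 = c ∧ g 0 = d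
  Ipos : ∀ ν, 0 < I ν
  quad : ∀ ν s, 0 ≤ s ^ 2 * I ν + 2 * s * J ν + K ν
  dA : ∀ ν, HasDerivAt A (A ν * J ν - B ν * I ν) ν
  dC : ∀ ν, HasDerivAt C (C ν * J ν - D ν * I ν) ν
  dD : ∀ ν, HasDerivAt D (C ν * K ν - D ν * J ν) ν
  nonneg : ∀ ν, C ν = 0 → 0 ≤ ν
  A0 : A 0 = 1
  C0 : C 0 = 0
  D0 : D 0 = 1

lemma hasDerivAt_of_factor {F q : ℝ → ℝ} {ν q' : ℝ} (h : ∀ x, F x = F ν + (x - ν) * q x)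
    (hq : ContinuousAt q ν) (hq' : q ν = q') : HasDerivAt F q' ν := by
  rw [hasDerivAt_iff_tendsto_slope]
  rw [← hq']
  refine (hq.tendsto.mono_left nhdsWithin_le_nhds).congr' ?_
  filter_upwards [self_mem_nhdsWithin] with x hx
  have : x - ν ≠ 0 := sub_ne_zero.2 hx
  rw [slope_def_field, h x]
  field_simp
  ring

lemma exists_fund (μ : Measure ℝ) [IsProbabilityMeasure μ] [NullSingletonClass μ]
    (hμ1 : μ.real (Set.Ioc 0 1) = 1) : ∃ A B C D I J K : ℝ → ℝ, Fund μ A B C D I J K := by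
  obtain ⟨φ, gφ, hφ, cφ⟩ := exists_sol μ 1 0
  obtain ⟨ψ, gψ, hψ, cψ⟩ := exists_sol μ 0 1
  have h0 : (0:ℝ) ∈ Set.Icc (0:ℝ) 1 := by simp
  have h1 : (1:ℝ) ∈ Set.Icc (0:ℝ) 1 := by simp
  have wφφ : ∀ ν ν', φ ν 1 * gφ ν' 1 - gφ ν 1 * φ ν' 1 = (ν - ν') * ∫ x in (0:ℝ)..1, φ ν x * φ ν' x ∂μ := by
    intro ν ν'
    have := (hφ ν).1.wronsk (hφ ν').1
    rw [(hφ ν).2.1, (hφ ν).2.2, (hφ ν').2.1, (hφ ν').2.2] at this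
    linarith
  have wφψ : ∀ ν ν', φ ν 1 * gψ ν' 1 - gφ ν 1 * ψ ν' 1 - 1 = (ν - ν') * ∫ x in (0:ℝ)..1, φ ν x * ψ ν' x ∂μ := by
    intro ν ν'
    have := (hφ ν).1.wronsk (hψ ν').1
    rw [(hφ ν).2.1, (hφ ν).2.2, (hψ ν').2.1, (hψ ν').2.2] at this
    linarith
  have wψφ : ∀ ν ν', ψ ν 1 * gφ ν' 1 - gψ ν 1 * φ ν' 1 + 1 = (ν - ν') * ∫ x in (0:ℝ)..1, ψ ν x * φ ν' x ∂μ := by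
    intro ν ν'
    have := (hψ ν).1.wronsk (hφ ν').1
    rw [(hψ ν).2.1, (hψ ν).2.2, (hφ ν').2.1, (hφ ν').2.2] at this
    linarith
  have wψψ : ∀ ν ν', ψ ν 1 * gψ ν' 1 - gψ ν 1 * ψ ν' 1 = (ν - ν') * ∫ x in (0:ℝ)..1, ψ ν x * ψ ν' x ∂μ := by
    intro ν ν'
    have := (hψ ν).1.wronsk (hψ ν').1
    rw [(hψ ν).2.1, (hψ ν).2.2, (hψ ν').2.1, (hψ ν').2.2] at this
    linarith
  have hdet : ∀ ν, φ ν 1 * gψ ν 1 - ψ ν 1 * gφ ν 1 = 1 := by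
    intro ν
    have := wφψ ν ν
    rw [sub_self, zero_mul] at this
    linarith
  have cJ : ∀ ν, ∫ x in (0:ℝ)..1, ψ ν x * φ ν x ∂μ = ∫ x in (0:ℝ)..1, φ ν x * ψ ν x ∂μ := by
    intro ν; congr 1; ext x; ring
  have hI : ∀ ν, 0 < ∫ x in (0:ℝ)..1, φ ν x * φ ν x ∂μ := by
    intro ν
    have hs := (hφ ν).1
    have hnn : 0 ≤ ∫ x in (0:ℝ)..1, φ ν x * φ ν x ∂μ :=
      intervalIntegral.integral_nonneg zero_le_one fun x _ => mul_self_nonneg _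
    refine lt_of_le_of_ne hnn fun hz => ?_
    rw [intervalIntegral.integral_of_le zero_le_one, eq_comm,
      integral_eq_zero_iff_of_nonneg (fun x => mul_self_nonneg _)
      (((hs.cy.mul hs.cy).integrableOn_Icc).mono_set Set.Ioc_subset_Icc_self)] at hz
    have hz' : ∀ᵐ x ∂(μ.restrict (Set.Ioc 0 1)), φ ν x = 0 := by
      filter_upwards [hz] with x hx
      simpa using hx
    have hg : ∀ x ∈ Set.Icc (0:ℝ) 1, gφ ν x = 0 := by
      intro x hx
      rw [hs.hg x hx, (hφ ν).2.2, intervalIntegral.integral_of_le hx.1]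
      have : ∫ t in Set.Ioc 0 x, φ ν t ∂μ = 0 := by
        refine integral_eq_zero_of_ae ?_
        exact ae_mono (Measure.restrict_mono (Set.Ioc_subset_Ioc_right hx.2) le_rfl) hz'
      rw [this]; simp
    have hy : ∀ x ∈ Set.Icc (0:ℝ) 1, φ ν x = 1 := by
      intro x hx
      rw [hs.hy x hx, (hφ ν).2.1, intervalIntegral.integral_congr (g := fun _ => 0)]
      · simp
      · intro t ht
        rw [Set.uIcc_of_le hx.1] at ht
        exact hg t ⟨ht.1, ht.2.trans hx.2⟩
    have hF : ∀ᵐ x ∂(μ.restrict (Set.Ioc 0 1)), False := by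
      filter_upwards [hz', ae_restrict_mem measurableSet_Ioc] with x hx hm
      rw [hy x ⟨hm.1.le, hm.2⟩] at hx
      exact one_ne_zero hx
    rw [Filter.eventually_false_iff_eq_bot, ae_eq_bot, Measure.restrict_eq_zero] at hF
    rw [measureReal_def, hF] at hμ1
    simp at hμ1
  have hsub : ∀ {ν y g u w}, Sol μ ν y g → Sol μ ν u w → y 0 = u 0 → g 0 = w 0 → y 1 = u 1 ∧ g 1 = w 1 := by
    intro ν y g u w ha hb e1 e2
    have := (ha.comb hb 1 (-1)).zero (by simp [e1]) (by simp [e2]) 1 h1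
    constructor <;> linarith [this.1, this.2]
  have s0 : Sol μ 0 (fun _ => 1) (fun _ => 0) :=
    ⟨continuousOn_const, continuousOn_const, fun x _ => by simp, fun x _ => by simp⟩
  have s1 : Sol μ 0 (fun x => x) (fun _ => 1) :=
    ⟨continuousOn_id, continuousOn_const, fun x _ => by simp, fun x _ => by simp⟩
  have e0 := hsub (hφ 0).1 s0 (hφ 0).2.1 (hφ 0).2.2
  have e1 := hsub (hψ 0).1 s1 (hψ 0).2.1 (hψ 0).2.2
  refine ⟨fun ν => φ ν 1, fun ν => ψ ν 1, fun ν => gφ ν 1, fun ν => gψ ν 1,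
    fun ν => ∫ x in (0:ℝ)..1, φ ν x * φ ν x ∂μ, fun ν => ∫ x in (0:ℝ)..1, φ ν x * ψ ν x ∂μ,
    fun ν => ∫ x in (0:ℝ)..1, ψ ν x * ψ ν x ∂μ, ?_⟩
  refine ⟨hdet, ?_, ?_, hI, ?_, ?_, ?_, ?_, ?_, e0.1, e0.2, e1.2⟩
  · intro ν y g h
    have := hsub h ((hφ ν).1.comb (hψ ν).1 (y 0) (g 0)) (by simp [hφ ν, hψ ν]) (by simp [hφ ν, hψ ν])
    rw [this.1, this.2]
    constructor <;> ring
  · intro ν c d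
    exact ⟨_, _, (hφ ν).1.comb (hψ ν).1 c d, by simp [hφ ν, hψ ν], by simp [hφ ν, hψ ν]⟩
  · intro ν s
    have i1 := (intOn μ (h := fun x => φ ν x * φ ν x) ((hφ ν).1.cy.mul (hφ ν).1.cy) h0 h1).const_mul (s^2)
    have i2 := (intOn μ (h := fun x => φ ν x * ψ ν x) ((hφ ν).1.cy.mul (hψ ν).1.cy) h0 h1).const_mul (2*s)
    have i3 := (intOn μ (h := fun x => ψ ν x * ψ ν x) ((hψ ν).1.cy.mul (hψ ν).1.cy) h0 h1)
    rw [← intervalIntegral.integral_const_mul, ← intervalIntegral.integral_const_mul,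
      ← intervalIntegral.integral_add i1 i2, ← intervalIntegral.integral_add (i1.add i2) i3]
    refine intervalIntegral.integral_nonneg zero_le_one fun x _ => ?_
    nlinarith [sq_nonneg (s * φ ν x + ψ ν x)]
  · intro ν
    refine hasDerivAt_of_factor (q := fun x => φ ν 1 * (∫ t in (0:ℝ)..1, ψ ν t * φ x t ∂μ) - ψ ν 1 * ∫ t in (0:ℝ)..1, φ ν t * φ x t ∂μ) ?_ ?_ ?_
    · intro x
      linear_combination (-φ x 1) * hdet ν - φ ν 1 * wψφ ν x + ψ ν 1 * wφφ ν x
    · have a1 := cφ _ (hφ ν).1.cy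
      have a2 := cφ _ (hψ ν).1.cy
      exact ((continuous_const.mul a2).sub (continuous_const.mul a1)).continuousAt
    · rw [cJ]
  · intro ν
    refine hasDerivAt_of_factor (q := fun x => gφ ν 1 * (∫ t in (0:ℝ)..1, ψ ν t * φ x t ∂μ) - gψ ν 1 * ∫ t in (0:ℝ)..1, φ ν t * φ x t ∂μ) ?_ ?_ ?_
    · intro x
      linear_combination (-gφ x 1) * hdet ν - gφ ν 1 * wψφ ν x + gψ ν 1 * wφφ ν x
    · have a1 := cφ _ (hφ ν).1.cy
      have a2 := cφ _ (hψ ν).1.cy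
      exact ((continuous_const.mul a2).sub (continuous_const.mul a1)).continuousAt
    · rw [cJ]
  · intro ν
    refine hasDerivAt_of_factor (q := fun x => gφ ν 1 * (∫ t in (0:ℝ)..1, ψ ν t * ψ x t ∂μ) - gψ ν 1 * ∫ t in (0:ℝ)..1, φ ν t * ψ x t ∂μ) ?_ ?_ rfl
    · intro x
      linear_combination (-gψ x 1) * hdet ν + gψ ν 1 * wφψ ν x - gφ ν 1 * wψψ ν x
    · have a1 := cψ _ (hφ ν).1.cy
      have a2 := cψ _ (hψ ν).1.cy
      exact ((continuous_const.mul a2).sub (continuous_const.mul a1)).continuousAt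
  · intro ν hC
    by_contra hneg
    push Not at hneg
    have := (hφ ν).1.green (hφ ν).1
    rw [hC, (hφ ν).2.2] at this
    have h3 : 0 ≤ ∫ x in (0:ℝ)..1, gφ ν x * gφ ν x :=
      intervalIntegral.integral_nonneg zero_le_one fun x _ => mul_self_nonneg _
    have h4 := hI ν
    nlinarith

end Cant


namespace Cant

/-- packaged facts on the measure -/
structure Meas (κ : ℕ) (a b : ℝ) (P : ℝ → ℝ) (μ : Measure ℝ) : Prop where
  hκ : 2 ≤ κ
  ha : 0 < a
  hb : 0 < b
  hab : ((κ:ℝ) - 1) * (a + b) + a = 1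
  mono : MonotoneOn P (Set.Icc 0 1)
  P0 : P 0 = 0
  P1 : P 1 = 1
  cP : ContinuousOn P (Set.Icc 0 1)
  cell : ∀ k : ℕ, k < κ → ∀ x ∈ Set.Icc (0:ℝ) 1, κ * P (k * (a + b) + a * x) = k + P x
  hμ : ∀ x ∈ Set.Icc (0 : ℝ) 1, μ (Set.Icc 0 x) = ENNReal.ofReal (P x)
  hμc : μ (Set.Icc (0 : ℝ) 1)ᶜ = 0

lemma Meas.mem {κ : ℕ} {a b : ℝ} {P : ℝ → ℝ} {μ : Measure ℝ} (H : Meas κ a b P μ) {k : ℕ} (hk : k < κ)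
    {x : ℝ} (hx : x ∈ Set.Icc (0:ℝ) 1) : k * (a + b) + a * x ∈ Set.Icc (0:ℝ) 1 := by
  have h1 := H.hab
  have ha := H.ha
  have hb := H.hb
  have hk' : (k:ℝ) ≤ κ - 1 := by
    have : (k:ℝ) + 1 ≤ κ := by exact_mod_cast hk
    linarith
  constructor
  · have := hx.1; positivity
  · have : (k:ℝ) * (a+b) ≤ (κ - 1) * (a+b) := by gcongr
    nlinarith [hx.2]

lemma mk_meas (κ : ℕ) (a b : ℝ) (hκ : 2 ≤ κ)
    (ha : 0 < a) (ha' : a < 1 / κ) (hb : b = (1 - κ * a) / (κ - 1))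
    (P : ℝ → ℝ) (hP : CantorType κ a b P) (hPmono : MonotoneOn P (Set.Icc 0 1))
    (μ : Measure ℝ)
    (hμ : ∀ x ∈ Set.Icc (0 : ℝ) 1, μ (Set.Icc 0 x) = ENNReal.ofReal (P x))
    (hμc : μ (Set.Icc (0 : ℝ) 1)ᶜ = 0) : Meas κ a b P μ := by
  obtain ⟨cP, P0, P1, hgap, hcell⟩ := hP
  have hκ2 : (2:ℝ) ≤ κ := by exact_mod_cast hκ
  have hκ0 : (0:ℝ) < κ := by linarith
  have hκ1 : (0:ℝ) < κ - 1 := by linarith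
  have hka : κ * a < 1 := by rw [lt_div_iff₀ hκ0] at ha'; linarith
  have hbpos : 0 < b := by rw [hb]; exact div_pos (by linarith) hκ1
  have hab : ((κ:ℝ) - 1) * (a + b) + a = 1 := by
    rw [hb]; field_simp; ring
  have hmem : ∀ k : ℕ, k < κ → ∀ x ∈ Set.Icc (0:ℝ) 1, k * (a + b) + a * x ∈ Set.Icc (0:ℝ) 1 := by
    intro k hk x hx
    have hk' : (k:ℝ) ≤ κ - 1 := by
      have : (k:ℝ) + 1 ≤ κ := by exact_mod_cast hk
      linarith
    constructor
    · have := hx.1; positivity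
    · have : (k:ℝ) * (a+b) ≤ (κ - 1) * (a+b) := by gcongr
      nlinarith [hx.2]
  have h0 : (0:ℝ) ∈ Set.Icc (0:ℝ) 1 := by simp
  have h1 : (1:ℝ) ∈ Set.Icc (0:ℝ) 1 := by simp
  have hstart : ∀ k : ℕ, k < κ → κ * P (k * (a + b)) = k := by
    intro k
    induction k with
    | zero => intro _; simp [P0]
    | succ k ih =>
      intro hk
      have ihk := ih (by omega)
      obtain ⟨c, hc⟩ := hcell k (by omega)
      have c0 := hc 0 h0
      have c1 := hc 1 h1
      rw [mul_zero, add_zero, P0] at c0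
      rw [mul_one, P1] at c1
      obtain ⟨d, hd⟩ := hgap (k+1) (by omega) (by omega)
      push_cast at hd ⊢
      rw [add_sub_cancel_right] at hd
      set l := (k:ℝ) * (a+b) + a with hl
      set r := ((k:ℝ) + 1) * (a+b) with hr
      have hlr : l < r := by rw [hl, hr]; linarith
      have hlI : l ∈ Set.Icc (0:ℝ) 1 := by simpa using hmem k (by omega) 1 h1
      have hrI : r ∈ Set.Icc (0:ℝ) 1 := by
        have := hmem (k+1) hk 0 h0; push_cast at this; simpa using this
      have hcl : Set.EqOn P (fun _ => d) (Set.Icc l r) := by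
        have := Set.EqOn.of_subset_closure (s := Set.Ioo l r) (t := Set.Icc l r) (f := P) (g := fun _ => d) hd
          (cP.mono (Set.Icc_subset_Icc hlI.1 hrI.2)) continuousOn_const Set.Ioo_subset_Icc_self
          (by rw [closure_Ioo hlr.ne])
        exact this
      have e1 := hcl (Set.left_mem_Icc.2 hlr.le)
      have e2 := hcl (Set.right_mem_Icc.2 hlr.le)
      simp only at e1 e2
      rw [e1] at c1
      rw [e2, c1]
      linarith
  refine ⟨hκ, ha, hbpos, hab, hPmono, P0, P1, cP, ?_, hμ, hμc⟩
  intro k hk x hx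
  obtain ⟨c, hc⟩ := hcell k (by omega)
  have c0 := hc 0 h0
  rw [mul_zero, add_zero, P0, hstart k hk] at c0
  rw [hc x hx]
  linarith

section
variable {κ : ℕ} {a b : ℝ} {P : ℝ → ℝ} {μ : Measure ℝ}

lemma Meas.prob (H : Meas κ a b P μ) : IsProbabilityMeasure μ := by
  constructor
  rw [← measure_add_measure_compl (measurableSet_Icc (a := (0:ℝ)) (b := 1)), H.hμc, H.hμ 1 (by simp), H.P1]
  simp

lemma Meas.ioc (H : Meas κ a b P μ) {s t : ℝ} (hs : 0 ≤ s) (hst : s ≤ t) (ht : t ≤ 1) :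
    μ (Set.Ioc s t) = ENNReal.ofReal (P t - P s) := by
  have := H.prob
  have hs' : s ∈ Set.Icc (0:ℝ) 1 := ⟨hs, hst.trans ht⟩
  have ht' : t ∈ Set.Icc (0:ℝ) 1 := ⟨hs.trans hst, ht⟩
  have : Set.Ioc s t = Set.Icc 0 t \ Set.Icc 0 s := by
    ext x; simp only [Set.mem_Ioc, Set.mem_sdiff, Set.mem_Icc]
    constructor
    · rintro ⟨h1, h2⟩; exact ⟨⟨by linarith, h2⟩, fun h => by linarith [h.2]⟩
    · rintro ⟨⟨h1, h2⟩, h3⟩; exact ⟨by by_contra h; exact h3 ⟨h1, by linarith⟩, h2⟩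
  rw [this, measure_sdiff (Set.Icc_subset_Icc_right hst) measurableSet_Icc.nullMeasurableSet (measure_ne_top _ _),
    H.hμ _ hs', H.hμ _ ht', ENNReal.ofReal_sub]
  rw [← H.P0]
  exact H.mono (by simp) hs' hs

lemma Meas.noatom (H : Meas κ a b P μ) : NullSingletonClass μ := by
  have := H.prob
  constructor
  intro x
  by_cases hx : x ∈ Set.Icc (0:ℝ) 1
  swap
  · exact measure_mono_null (Set.singleton_subset_iff.2 hx) H.hμc
  rcases hx.1.eq_or_lt with h | h
  · have := H.hμ 0 (by simp)
    rw [Set.Icc_self, H.P0] at this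
    rw [← h, this]; simp
  · have hle : ∀ s ∈ Set.Ioo 0 x, μ {x} ≤ ENNReal.ofReal (P x - P s) := by
      intro s hs
      rw [← H.ioc hs.1.le hs.2.le hx.2]
      exact measure_mono (Set.singleton_subset_iff.2 ⟨hs.2, le_rfl⟩)
    have ht : Filter.Tendsto (fun s => ENNReal.ofReal (P x - P s)) (nhdsWithin x (Set.Ioo 0 x)) (nhds 0) := by
      have h1 : Filter.Tendsto P (nhdsWithin x (Set.Ioo 0 x)) (nhds (P x)) :=
        (H.cP x hx).mono (fun s hs => ⟨hs.1.le, hs.2.le.trans hx.2⟩)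
      have h2 := ENNReal.tendsto_ofReal (h1.const_sub (P x))
      simpa using h2
    have : (nhdsWithin x (Set.Ioo 0 x)).NeBot := by
      rw [nhdsWithin_Ioo_eq_nhdsLT h]; infer_instance
    have := ge_of_tendsto ht (by filter_upwards [self_mem_nhdsWithin] with s hs using hle s hs)
    exact le_antisymm this (zero_le)

lemma Meas.iic (H : Meas κ a b P μ) {w : ℝ} (hw : w ∈ Set.Icc (0:ℝ) 1) :
    μ (Set.Iic w) = ENNReal.ofReal (P w) := by
  rw [← H.hμ w hw]
  refine le_antisymm ?_ (measure_mono Set.Icc_subset_Iic_self)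
  calc μ (Set.Iic w) ≤ μ (Set.Icc 0 w ∪ (Set.Icc 0 1)ᶜ) := by
        refine measure_mono fun x hx => ?_
        by_cases h : x ∈ Set.Icc (0:ℝ) 1
        · exact Or.inl ⟨h.1, hx⟩
        · exact Or.inr h
    _ ≤ μ (Set.Icc 0 w) + μ (Set.Icc 0 1)ᶜ := measure_union_le _ _
    _ = _ := by rw [H.hμc, add_zero]

lemma Meas.iic_neg (H : Meas κ a b P μ) {w : ℝ} (hw : w < 0) : μ (Set.Iic w) = 0 :=
  by
  refine measure_mono_null (t := (Set.Icc (0:ℝ) 1)ᶜ) ?_ H.hμc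
  intro x hx h
  have := h.1
  have : x ≤ w := hx
  linarith

lemma Meas.iic_one (H : Meas κ a b P μ) {w : ℝ} (hw : 1 ≤ w) : μ (Set.Iic w) = 1 := by
  have := H.prob
  refine le_antisymm prob_le_one ?_
  have := H.iic (w := 1) (by simp)
  rw [H.P1, ENNReal.ofReal_one] at this
  rw [← this]
  exact measure_mono (Set.Iic_subset_Iic.2 hw)

lemma Meas.cell_measure (H : Meas κ a b P μ) {k : ℕ} (hk : k < κ) :
    μ.restrict (Set.Ioc (k * (a+b)) (k * (a + b) + a)) =
      ENNReal.ofReal (1 / κ) • μ.map (fun x => k * (a + b) + a * x) := by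
  have := H.prob
  have hκ0 : (0:ℝ) < κ := by have := H.hκ; positivity
  have ha := H.ha
  set α := (k:ℝ) * (a + b) with hα
  have hα0 : α ∈ Set.Icc (0:ℝ) 1 := by have := H.mem hk (x := 0) (by simp); simpa using this
  have hα1 : α + a ∈ Set.Icc (0:ℝ) 1 := by have := H.mem hk (x := 1) (by simp); simpa using this
  have c0 : κ * P α = k := by have := H.cell k hk 0 (by simp); simpa [H.P0] using this
  refine Measure.ext_of_Iic _ _ fun z => ?_
  rw [Measure.restrict_apply measurableSet_Iic, Measure.smul_apply,
    Measure.map_apply (by fun_prop) measurableSet_Iic]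
  have e1 : (fun x => α + a * x) ⁻¹' (Set.Iic z) = Set.Iic ((z - α) / a) := by
    ext x; simp only [Set.mem_preimage, Set.mem_Iic]
    rw [le_div_iff₀ ha]; constructor <;> intro h <;> linarith
  rw [e1, Set.inter_comm, Set.Ioc_inter_Iic, smul_eq_mul]
  rcases lt_or_ge z α with hz | hz
  · rw [H.iic_neg (div_neg_of_neg_of_pos (by linarith) ha), Set.Ioc_eq_empty (by simp [hz.le])]
    simp
  rcases le_or_gt z (α + a) with hz' | hz'
  · rw [min_eq_right hz']
    have hx : (z - α) / a ∈ Set.Icc (0:ℝ) 1 :=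
      ⟨div_nonneg (by linarith) ha.le, by rw [div_le_one ha]; linarith⟩
    rw [H.iic hx, H.ioc hα0.1 hz (hz'.trans hα1.2), ← ENNReal.ofReal_mul (by positivity)]
    have := H.cell k hk _ hx
    rw [mul_div_cancel₀ _ ha.ne', ← hα, add_sub_cancel] at this
    congr 1
    field_simp
    linarith
  · rw [min_eq_left hz'.le, H.iic_one (by rw [le_div_iff₀ ha]; linarith), H.ioc hα0.1 (by linarith) hα1.2, mul_one]
    have := H.cell k hk 1 (by simp)
    rw [mul_one, ← hα, H.P1] at this
    congr 1
    field_simp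
    linarith

lemma Meas.cell_int (H : Meas κ a b P μ) {k : ℕ} (hk : k < κ) (y : ℝ → ℝ) {x : ℝ} (hx : x ∈ Set.Icc (0:ℝ) 1) :
    ∫ t in (k * (a+b))..(k * (a + b) + a * x), y t ∂μ =
      1 / κ * ∫ t in (0:ℝ)..x, y (k * (a + b) + a * t) ∂μ := by
  have ha := H.ha
  have hax : 0 ≤ a * x := mul_nonneg ha.le hx.1
  have hax' : a * x ≤ a := mul_le_of_le_one_right ha.le hx.2
  rw [intervalIntegral.integral_of_le (by linarith), intervalIntegral.integral_of_le hx.1]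
  have hr : μ.restrict (Set.Ioc (k * (a+b)) (k * (a + b) + a * x)) =
      (μ.restrict (Set.Ioc (k * (a+b)) (k * (a + b) + a))).restrict (Set.Ioc (k * (a+b)) (k * (a + b) + a * x)) := by
    rw [Measure.restrict_restrict measurableSet_Ioc, Set.inter_eq_left.2 (Set.Ioc_subset_Ioc_right (by linarith))]
  rw [hr, H.cell_measure hk, Measure.restrict_smul, integral_smul_measure]
  have hemb : MeasurableEmbedding (fun x => (k:ℝ) * (a + b) + a * x) :=
    (measurableEmbedding_addLeft ((k:ℝ) * (a+b))).comp (measurableEmbedding_mulLeft₀ ha.ne')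
  rw [hemb.setIntegral_map]
  have e1 : (fun x => k * (a + b) + a * x) ⁻¹' (Set.Ioc (k * (a+b)) (k * (a + b) + a * x)) = Set.Ioc 0 x := by
    ext t; simp only [Set.mem_preimage, Set.mem_Ioc]
    constructor
    · rintro ⟨h1, h2⟩; exact ⟨by by_contra h; push Not at h; nlinarith, by by_contra h; push Not at h; nlinarith⟩
    · rintro ⟨h1, h2⟩; exact ⟨by nlinarith, by nlinarith⟩
  rw [e1, ENNReal.toReal_ofReal (by positivity), smul_eq_mul]

lemma Sol.add_g {ν : ℝ} {y g : ℝ → ℝ} [IsFiniteMeasure μ] (h : Sol μ ν y g) {s t : ℝ}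
    (hs : s ∈ Set.Icc (0:ℝ) 1) (ht : t ∈ Set.Icc (0:ℝ) 1) : g t = g s - ν * ∫ x in s..t, y x ∂μ := by
  have h0 : (0:ℝ) ∈ Set.Icc (0:ℝ) 1 := by simp
  rw [h.hg t ht, h.hg s hs, ← intervalIntegral.integral_add_adjacent_intervals (intOn μ h.cy h0 hs) (intOn μ h.cy hs ht)]
  ring

lemma Sol.add_y {ν : ℝ} {y g : ℝ → ℝ} (h : Sol μ ν y g) {s t : ℝ}
    (hs : s ∈ Set.Icc (0:ℝ) 1) (ht : t ∈ Set.Icc (0:ℝ) 1) : y t = y s + ∫ x in s..t, g x := by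
  have h0 : (0:ℝ) ∈ Set.Icc (0:ℝ) 1 := by simp
  rw [h.hy t ht, h.hy s hs, ← intervalIntegral.integral_add_adjacent_intervals
    ((h.cg.mono (Set.uIcc_subset_Icc h0 hs)).intervalIntegrable) ((h.cg.mono (Set.uIcc_subset_Icc hs ht)).intervalIntegrable)]
  ring

lemma Meas.cell_sol (H : Meas κ a b P μ) {k : ℕ} (hk : k < κ) {ν : ℝ} {y g : ℝ → ℝ} (h : Sol μ ν y g) :
    Sol μ (a * ν / κ) (fun x => y (k * (a+b) + a * x)) (fun x => a * g (k * (a+b) + a * x)) := by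
  have := H.prob
  have hκ0 : (0:ℝ) < κ := by have := H.hκ; positivity
  have ha := H.ha
  have h0 : (0:ℝ) ∈ Set.Icc (0:ℝ) 1 := by simp
  have hc : ContinuousOn (fun x => (k:ℝ) * (a+b) + a * x) (Set.Icc 0 1) := by fun_prop
  refine ⟨h.cy.comp hc fun x hx => H.mem hk hx, continuousOn_const.mul (h.cg.comp hc fun x hx => H.mem hk hx), ?_, ?_⟩
  · intro x hx
    rw [h.add_y (H.mem hk h0) (H.mem hk hx), intervalIntegral.integral_const_mul,
      intervalIntegral.mul_integral_comp_add_mul]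
  · intro x hx
    rw [h.add_g (H.mem hk h0) (H.mem hk hx), mul_zero, add_zero, H.cell_int hk y hx]
    ring

lemma Meas.gap (H : Meas κ a b P μ) {k : ℕ} (hk : k + 1 < κ) {ν : ℝ} {y g : ℝ → ℝ} (h : Sol μ ν y g) :
    g ((k+1:ℕ) * (a+b)) = g (k * (a+b) + a) ∧
    y ((k+1:ℕ) * (a+b)) = y (k * (a+b) + a) + b * g (k * (a+b) + a) := by
  have := H.prob
  have hκ0 : (0:ℝ) < κ := by have := H.hκ; positivity
  have hb := H.hb
  have hl : (k:ℝ) * (a+b) + a ∈ Set.Icc (0:ℝ) 1 := by have := H.mem (k := k) (by omega) (x := 1) (by simp); simpa using this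
  have hr : ((k+1:ℕ):ℝ) * (a+b) ∈ Set.Icc (0:ℝ) 1 := by have := H.mem hk (x := 0) (by simp); simpa using this
  have e : ((k+1:ℕ):ℝ) * (a+b) = k * (a+b) + a + b := by push_cast; ring
  have c1 := H.cell k (by omega) 1 (by simp)
  have c2 := H.cell (k+1) hk 0 (by simp)
  rw [mul_one, H.P1] at c1
  rw [mul_zero, add_zero, H.P0] at c2
  push_cast at c2
  have hPeq : P (((k+1:ℕ):ℝ) * (a+b)) = P (k * (a+b) + a) := by
    push_cast
    refine mul_left_cancel₀ hκ0.ne' ?_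
    linarith
  have hnull : μ (Set.Ioc ((k:ℝ) * (a+b) + a) (((k+1:ℕ):ℝ) * (a+b))) = 0 := by
    rw [H.ioc hl.1 (by linarith) hr.2, hPeq]; simp
  have hg : ∀ t ∈ Set.Icc ((k:ℝ) * (a+b) + a) (((k+1:ℕ):ℝ) * (a+b)), g t = g (k * (a+b) + a) := by
    intro t ht
    rw [h.add_g hl ⟨hl.1.trans ht.1, ht.2.trans hr.2⟩, intervalIntegral.integral_of_le ht.1,
      setIntegral_measure_zero _ (measure_mono_null (Set.Ioc_subset_Ioc_right ht.2) hnull)]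
    ring
  refine ⟨hg _ ⟨by linarith, le_rfl⟩, ?_⟩
  rw [h.add_y hl hr, intervalIntegral.integral_congr (g := fun _ => g (k * (a+b) + a))]
  · rw [intervalIntegral.integral_const, e, smul_eq_mul]; ring
  · intro t ht
    rw [Set.uIcc_of_le (by linarith)] at ht
    exact hg t ht

open Polynomial Polynomial.Chebyshev in
lemma Meas.iter (H : Meas κ a b P μ) {A B C D I J K : ℝ → ℝ} (F : Fund μ A B C D I J K) {l : ℝ} {y g : ℝ → ℝ}
    (h : Sol μ l y g) {ν θ : ℝ} (hν : ν = a * l / κ) (hθ : 2 * θ = A ν + D ν + b / a * C ν) :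
    ∀ k : ℕ, k < κ →
      y (k * (a+b) + a) = (U ℝ k).eval θ * (A ν * y 0 + B ν * (a * g 0)) - (U ℝ (k - 1)).eval θ * (y 0 - b * g 0) ∧
      a * g (k * (a+b) + a) = (U ℝ k).eval θ * (C ν * y 0 + D ν * (a * g 0)) - (U ℝ (k - 1)).eval θ * (a * g 0) := by
  have ha := H.ha
  have hdet := F.det ν
  have step : ∀ k : ℕ, k < κ → y (k * (a+b) + a) = A ν * y (k * (a+b)) + B ν * (a * g (k * (a+b))) ∧
      a * g (k * (a+b) + a) = C ν * y (k * (a+b)) + D ν * (a * g (k * (a+b))) := by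
    intro k hk
    have := F.tr _ _ _ (H.cell_sol hk h)
    rw [← hν] at this
    simpa only [mul_one, mul_zero, add_zero] using this
  intro k
  induction k with
  | zero =>
    intro hk
    have := step 0 hk
    simpa using this
  | succ k ih =>
    intro hk
    obtain ⟨i1, i2⟩ := ih (by omega)
    obtain ⟨g1, g2⟩ := H.gap hk h
    obtain ⟨s1, s2⟩ := step (k+1) hk
    rw [s1, s2, g1, g2]
    have hU : (U ℝ ((k+1:ℕ):ℤ)).eval θ = 2 * θ * (U ℝ k).eval θ - (U ℝ (k - 1)).eval θ := by
      have := U_add_two ℝ ((k:ℤ) - 1)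
      have e1 : (k:ℤ) - 1 + 2 = k + 1 := by ring
      have e2 : (k:ℤ) - 1 + 1 = k := by ring
      rw [e1, e2] at this
      push_cast
      rw [this]; simp
    have e3 : ((k+1:ℕ):ℤ) - 1 = k := by push_cast; ring
    have hbg : b * g (k * (a+b) + a) = b / a * (a * g (k * (a+b) + a)) := by field_simp
    have hbg0 : b * g 0 = b / a * (a * g 0) := by field_simp
    rw [hU, e3, hbg, i1, i2, hbg0, hθ]
    set τ := b / a
    constructor
    · linear_combination (-(U ℝ k).eval θ * y 0 + (U ℝ k).eval θ * τ * (a * g 0)) * hdet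
    · linear_combination (-(U ℝ k).eval θ * (a * g 0)) * hdet

open Polynomial Polynomial.Chebyshev in
lemma Meas.selfsim (H : Meas κ a b P μ) {A B C D I J K : ℝ → ℝ} (F : Fund μ A B C D I J K) {l ν θ : ℝ}
    (hν : ν = a * l / κ) (hθ : 2 * θ = A ν + D ν + b / a * C ν) :
    a * C l = (U ℝ ((κ:ℤ) - 1)).eval θ * C ν ∧
    A l - D l = (U ℝ ((κ:ℤ) - 1)).eval θ * (A ν - D ν) := by
  have ha := H.ha
  obtain ⟨y, g, hs, hy, hg⟩ := F.ex l 1 0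
  obtain ⟨y', g', hs', hy', hg'⟩ := F.ex l 0 1
  have hκ := H.hκ
  have h1 := H.iter F hs hν hθ (κ - 1) (by omega)
  have h2 := H.iter F hs' hν hθ (κ - 1) (by omega)
  have e : ((κ - 1 : ℕ):ℝ) * (a+b) + a = 1 := by
    rw [Nat.cast_sub (by omega)]; push_cast; exact H.hab
  have e' : ((κ - 1 : ℕ):ℤ) = (κ:ℤ) - 1 := by omega
  rw [e, e'] at h1 h2
  have t1 := F.tr _ _ _ hs
  have t2 := F.tr _ _ _ hs'
  rw [t1.1, t1.2, hy, hg] at h1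
  rw [t2.1, t2.2, hy', hg'] at h2
  refine ⟨by linear_combination h1.2, ?_⟩
  have h3 : D l = (U ℝ ((κ:ℤ) - 1)).eval θ * D ν - (U ℝ ((κ:ℤ) - 1 - 1)).eval θ := by
    refine mul_left_cancel₀ ha.ne' ?_
    linear_combination h2.2
  linear_combination h1.1 - h3

end

end Cant


namespace Cant

section
variable {κ : ℕ} {a b : ℝ} {P : ℝ → ℝ} {μ : Measure ℝ}

lemma eigen_iff [IsProbabilityMeasure μ] [NullSingletonClass μ] {A B C D I J K : ℝ → ℝ}
    (F : Fund μ A B C D I J K) (γ l : ℝ) : IsEigen μ 0 γ l ↔ C l + γ * A l = 0 := by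
  constructor
  · rintro ⟨y, g, cy, cg, ⟨x, hx, hyx⟩, hy, hg, e0, e1⟩
    have hs : Sol μ l y g := by
      refine ⟨cy, cg, hy, fun x hx => ?_⟩
      rw [hg x hx, integral_Icc_eq_integral_Ioc, intervalIntegral.integral_of_le hx.1]
    have g0 : g 0 = 0 := by simpa using e0
    have hy0 : y 0 ≠ 0 := fun h => hyx (hs.zero h g0 x hx).1
    have := F.tr _ _ _ hs
    rw [this.1, this.2, g0] at e1
    refine mul_left_cancel₀ hy0 ?_
    linear_combination e1
  · intro h
    obtain ⟨y, g, hs, hy, hg⟩ := F.ex l 1 0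
    refine ⟨y, g, hs.cy, hs.cg, ⟨0, by simp, by rw [hy]; exact one_ne_zero⟩, hs.hy, fun x hx => ?_, by rw [hg]; ring, ?_⟩
    · rw [hs.hg x hx, integral_Icc_eq_integral_Ioc, intervalIntegral.integral_of_le hx.1]
    · have := F.tr _ _ _ hs
      rw [this.1, this.2, hy, hg]
      linear_combination h

open Polynomial Polynomial.Chebyshev in
lemma Meas.symm (H : Meas κ a b P μ) {A B C D I J K : ℝ → ℝ} (F : Fund μ A B C D I J K) :
    ∀ l, A l = D l := by
  have ha := H.ha
  have hb := H.hb
  have hκ2 : (2:ℝ) ≤ κ := by exact_mod_cast H.hκ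
  have ha1 : a < 1 := by have := H.hab; nlinarith
  have hκ0 : (0:ℝ) < κ := by linarith
  set r := a / κ with hr
  have hr0 : 0 < r := by positivity
  have hr1 : r < 1 := by rw [hr, div_lt_one hκ0]; linarith
  let θ : ℝ → ℝ := fun ν => (A ν + D ν + b / a * C ν) / 2
  let u : ℝ → ℝ := fun ν => (U ℝ ((κ:ℤ) - 1)).eval (θ ν)
  let d : ℝ → ℝ := fun ν => A ν - D ν
  have hrec : ∀ l, d l = u (r * l) * d (r * l) := by
    intro l
    have := (H.selfsim F (l := l) (ν := r * l) (θ := θ (r * l)) (by rw [hr]; ring) (by simp only [θ]; ring)).2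
    exact this
  have hθ0 : θ 0 = 1 := by simp only [θ, F.A0, F.D0, F.C0]; norm_num
  have hu0 : u 0 = κ := by
    simp only [u, hθ0, U_eval_one]; push_cast; ring
  have cθ : ContinuousAt θ 0 := by
    have h1 := (F.dA 0).continuousAt
    have h2 := (F.dD 0).continuousAt
    have h3 := (F.dC 0).continuousAt
    exact ((h1.add h2).add (continuousAt_const.mul h3)).div_const 2
  have cu : ContinuousAt u 0 := ContinuousAt.comp (f := θ) (Polynomial.continuous _).continuousAt cθ
  obtain ⟨ρ, hρa, hρ1⟩ := exists_between ha1
  have ev1 : ∀ᶠ x in nhds 0, |u x| * r < ρ := by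
    have : ContinuousAt (fun x => |u x| * r) 0 := cu.abs.mul continuousAt_const
    refine this.eventually (gt_mem_nhds ?_)
    show |u 0| * r < ρ
    rw [hu0, abs_of_pos hκ0, hr, mul_div_cancel₀ _ hκ0.ne']
    exact hρa
  obtain ⟨M, hM⟩ := (((F.dA 0).sub (F.dD 0)).isBigO_sub).bound
  have hd0 : d 0 = 0 := by simp only [d, F.A0, F.D0, sub_self]
  have ev2 : ∀ᶠ x in nhds 0, |d x| ≤ |M| * |x| := by
    filter_upwards [hM] with x hx
    have e : (A - D) x - (A - D) 0 = d x := by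
      show d x - d 0 = d x
      rw [hd0, sub_zero]
    rw [e, sub_zero, Real.norm_eq_abs, Real.norm_eq_abs] at hx
    exact hx.trans (by gcongr; exact le_abs_self _)
  obtain ⟨δ, hδ, hball⟩ := Metric.eventually_nhds_iff.1 (ev1.and ev2)
  simp only [dist_zero_right, Real.norm_eq_abs] at hball
  have hρ0 : 0 < ρ := ha.trans hρa
  have hrx : ∀ x, |r * x| ≤ |x| := by
    intro x
    rw [abs_mul, abs_of_pos hr0]
    exact mul_le_of_le_one_left (abs_nonneg _) hr1.le
  have bound : ∀ n : ℕ, ∀ x, |x| < δ → |d x| ≤ |M| * |x| * ρ ^ n := by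
    intro n
    induction n with
    | zero => intro x hx; simpa using (hball hx).2
    | succ n ih =>
      intro x hx
      have hx' : |r * x| < δ := (hrx x).trans_lt hx
      rw [hrec x, abs_mul]
      have h1 := ih _ hx'
      have h2 := (hball hx').1.le
      rw [abs_mul, abs_of_pos hr0] at h1
      calc |u (r*x)| * |d (r*x)| ≤ |u (r*x)| * (|M| * (r * |x|) * ρ^n) := by gcongr
        _ = (|u (r*x)| * r) * (|M| * |x| * ρ^n) := by ring
        _ ≤ ρ * (|M| * |x| * ρ^n) := by gcongr
        _ = _ := by ring
  have hsmall : ∀ x, |x| < δ → d x = 0 := by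
    intro x hx
    have ht : Filter.Tendsto (fun n : ℕ => |M| * |x| * ρ ^ n) Filter.atTop (nhds 0) := by
      have := (tendsto_pow_atTop_nhds_zero_of_lt_one hρ0.le hρ1).const_mul (|M| * |x|)
      simpa using this
    have := ge_of_tendsto' ht (fun n => bound n x hx)
    exact abs_nonpos_iff.1 this
  have hall : ∀ n : ℕ, ∀ x, |r ^ n * x| < δ → d x = 0 := by
    intro n
    induction n with
    | zero => intro x hx; exact hsmall x (by simpa using hx)
    | succ n ih =>
      intro x hx
      rw [hrec x, ih (r * x) (by rwa [← mul_assoc, ← pow_succ]), mul_zero]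
  intro l
  have ht : Filter.Tendsto (fun n : ℕ => |r ^ n * l|) Filter.atTop (nhds 0) := by
    have := ((tendsto_pow_atTop_nhds_zero_of_lt_one hr0.le hr1).mul_const l).abs
    simpa using this
  obtain ⟨n, hn⟩ := (ht.eventually (gt_mem_nhds hδ)).exists
  exact sub_eq_zero.1 (hall n l hn)

end

open Polynomial Polynomial.Chebyshev in
lemma U_zero_iff {κ : ℕ} (hκ : 2 ≤ κ) (θ : ℝ) : (U ℝ ((κ:ℤ) - 1)).eval θ = 0 ↔
    ∃ j : ℕ, 0 < j ∧ j < κ ∧ θ = Real.cos (j * Real.pi / κ) := by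
  obtain ⟨n, rfl⟩ : ∃ n, κ = n + 1 := ⟨κ - 1, by omega⟩
  have e : (((n + 1 : ℕ) : ℤ) - 1) = (n : ℤ) := by push_cast; ring
  rw [e]
  have hne : U ℝ (n : ℤ) ≠ 0 := by
    intro h
    have := degree_U_natCast ℝ n
    rw [h] at this
    simp at this
  have h1 : (U ℝ (n : ℤ)).eval θ = 0 ↔ θ ∈ (U ℝ (n : ℤ)).roots := by
    rw [Polynomial.mem_roots hne]; rfl
  rw [h1, roots_U_real]
  simp only [Finset.mem_val, Finset.mem_image, Finset.mem_range]
  constructor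
  · rintro ⟨k, hk, rfl⟩
    exact ⟨k + 1, by omega, by omega, by push_cast; rfl⟩
  · rintro ⟨j, h0, hj, rfl⟩
    refine ⟨j - 1, by omega, ?_⟩
    obtain ⟨i, rfl⟩ : ∃ i, j = i + 1 := ⟨j - 1, by omega⟩
    simp

end Cant


namespace Cant

lemma slope_right {f : ℝ → ℝ} {f' p : ℝ} (h : HasDerivAt f f' p) (hf : f' < 0) :
    ∀ᶠ x in nhdsWithin p (Set.Ioi p), f x < f p := by
  have h1 := (hasDerivAt_iff_tendsto_slope.1 h).mono_left
    (nhdsWithin_mono p (fun x (hx : p < x) => (ne_of_gt hx : x ≠ p)))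
  filter_upwards [h1.eventually (gt_mem_nhds hf), self_mem_nhdsWithin] with x hx hpx
  have hpx' : 0 < x - p := sub_pos.2 hpx
  rw [slope_def_field, div_lt_iff₀ hpx'] at hx
  linarith

lemma slope_left {f : ℝ → ℝ} {f' p : ℝ} (h : HasDerivAt f f' p) (hf : f' < 0) :
    ∀ᶠ x in nhdsWithin p (Set.Iio p), f p < f x := by
  have h1 := (hasDerivAt_iff_tendsto_slope.1 h).mono_left
    (nhdsWithin_mono p (fun x (hx : x < p) => (ne_of_lt hx : x ≠ p)))
  filter_upwards [h1.eventually (gt_mem_nhds hf), self_mem_nhdsWithin] with x hx hpx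
  have hpx' : x - p < 0 := sub_neg.2 hpx
  rw [slope_def_field, div_lt_iff_of_neg hpx'] at hx
  linarith

lemma sign_step {f f' : ℝ → ℝ} (hd : ∀ x, HasDerivAt f (f' x) x) {p q : ℝ} (hpq : p < q)
    (hp : f p = 0) (hq : f q = 0) (hnz : ∀ x ∈ Set.Ioo p q, f x ≠ 0) (h : f' p < 0) :
    (∀ x ∈ Set.Ioo p q, f x < 0) ∧ ¬ f' q < 0 := by
  have cf : Continuous f := continuous_iff_continuousAt.2 fun x => (hd x).continuousAt
  have h1 : ∀ x ∈ Set.Ioo p q, f x < 0 := by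
    intro x hx
    by_contra hc
    have hc' : 0 ≤ f x := not_lt.1 hc
    obtain ⟨z, hz1, hz2⟩ := ((slope_right (hd p) h).and (Ioo_mem_nhdsGT hx.1)).exists
    rw [hp] at hz1
    obtain ⟨w, hw, hw0⟩ := intermediate_value_Icc hz2.2.le cf.continuousOn (⟨hz1.le, hc'⟩ : (0:ℝ) ∈ Set.Icc (f z) (f x))
    exact hnz w ⟨hz2.1.trans_le hw.1, hw.2.trans_lt hx.2⟩ hw0
  refine ⟨h1, fun hlt => ?_⟩
  obtain ⟨z, hz1, hz2⟩ := ((slope_left (hd q) hlt).and (Ioo_mem_nhdsLT hpq)).exists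
  rw [hq] at hz1
  exact (h1 z hz2).not_gt hz1

lemma desc {f f' : ℝ → ℝ} (hd : ∀ x, HasDerivAt f (f' x) x) {p q : ℝ}
    (hneg : ∀ x ∈ Set.Ioo p q, |f x| < 1 → f' x < 0) {x y : ℝ} (hx : p < x) (hxy : x < y) (hy : y < q)
    (hfx : |f x| < 1) : f y < f x := by
  have cf : Continuous f := continuous_iff_continuousAt.2 fun x => (hd x).continuousAt
  have hx' := abs_lt.1 hfx
  obtain ⟨z, ⟨hz1, hz2⟩, hz3⟩ := (((slope_right (hd x) (hneg x ⟨hx, hxy.trans hy⟩ hfx)).and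
    (Ioo_mem_nhdsGT hxy)).and (((cf.tendsto x).mono_left nhdsWithin_le_nhds).eventually (lt_mem_nhds hx'.1))).exists
  have := image_le_of_deriv_right_lt_deriv_boundary' (f := f) (f' := f') (a := z) (b := y)
    (B := fun _ => f z) (B' := fun _ => 0) cf.continuousOn (fun w _ => (hd w).hasDerivWithinAt) le_rfl
    continuousOn_const (fun w _ => hasDerivWithinAt_const _ _ _)
    (fun w hw e => hneg w ⟨hx.trans (hz2.1.trans_le hw.1), hw.2.trans hy⟩ (by
      rw [e, abs_lt]; exact ⟨hz3, hz1.trans hx'.2⟩))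
  exact (this ⟨hz2.2.le, le_rfl⟩).trans_lt hz1

lemma core {κ : ℕ} (hκ : 2 ≤ κ) (hev : Even κ) {c : ℝ} (hc : 0 < c) {C C' θ θ' : ℝ → ℝ}
    (dC : ∀ x, HasDerivAt C (C' x) x) (dθ : ∀ x, HasDerivAt θ (θ' x) x)
    (hz : ∀ x, C x = 0 → θ x ^ 2 = 1 ∧ θ x * C' x < 0)
    (hpos : ∀ x, |θ x| < 1 → 0 < C x * θ' x)
    (C0 : C 0 = 0) (θ0 : θ 0 = 1) (nonneg : ∀ x, C x = 0 → 0 ≤ x)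
    (hself : ∀ x, C (c * x) = 0 ↔ C x = 0 ∨ ∃ j : ℕ, 0 < j ∧ j < κ ∧ θ x = Real.cos (j * Real.pi / κ))
    (lam : ℕ → ℝ) (hlam : StrictMono lam) (hlr : ∀ x, (∃ n, lam n = x) ↔ C x = 0)
    (mu : ℕ → ℝ) (hmu : StrictMono mu) (hmr : ∀ x, (∃ n, mu n = x) ↔ θ x = 0) :
    ∀ n : ℕ, lam (κ * n + κ / 2) = c * mu n := by
  have cC : Continuous C := continuous_iff_continuousAt.2 fun x => (dC x).continuousAt
  have cθ : Continuous θ := continuous_iff_continuousAt.2 fun x => (dθ x).continuousAt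
  have hκ0 : (0:ℝ) < κ := by exact_mod_cast (by omega : 0 < κ)
  have Cl : ∀ n, C (lam n) = 0 := fun n => (hlr _).1 ⟨n, rfl⟩
  have lam0 : lam 0 = 0 := by
    obtain ⟨n, hn⟩ := (hlr 0).2 C0
    exact le_antisymm (hn ▸ hlam.monotone (Nat.zero_le n)) (nonneg _ (Cl 0))
  have nz : ∀ n, ∀ x ∈ Set.Ioo (lam n) (lam (n+1)), C x ≠ 0 := by
    intro n x hx h0
    obtain ⟨m, rfl⟩ := (hlr x).2 h0
    have h1 := hlam.lt_iff_lt.1 hx.1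
    have h2 := hlam.lt_iff_lt.1 hx.2
    omega
  have s2 : ∀ n : ℕ, ((-1:ℝ)^n) * (-1)^n = 1 := by
    intro n; rw [← mul_pow]; norm_num
  have alt : ∀ n : ℕ, θ (lam n) = (-1)^n ∧ θ (lam (n+1)) = (-1)^(n+1) ∧
      ∀ x ∈ Set.Ioo (lam n) (lam (n+1)), (-1)^n * C x < 0 := by
    have key : ∀ n : ℕ, θ (lam n) = (-1)^n → θ (lam (n+1)) = (-1)^(n+1) ∧
      ∀ x ∈ Set.Ioo (lam n) (lam (n+1)), (-1)^n * C x < 0 := by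
      intro n hn
      have hs := s2 n
      obtain ⟨h1, h2⟩ := sign_step (f := fun x => (-1)^n * C x) (f' := fun x => (-1)^n * C' x)
        (fun x => (dC x).const_mul _) (hlam (Nat.lt_succ_self n)) (by simp [Cl]) (by simp [Cl])
        (fun x hx => mul_ne_zero (pow_ne_zero _ (by norm_num)) (nz n x hx)) (by have := (hz _ (Cl n)).2; rwa [hn] at this)
      refine ⟨?_, h1⟩
      obtain ⟨h3, h4⟩ := hz _ (Cl (n+1))
      have : (θ (lam (n+1)) - (-1)^n) * (θ (lam (n+1)) + (-1)^n) = 0 := by linear_combination h3 - hs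
      rcases mul_eq_zero.1 this with h | h
      · exfalso; apply h2
        rw [sub_eq_zero] at h
        rwa [h] at h4
      · rw [pow_succ]; linarith
    have base : ∀ n : ℕ, θ (lam n) = (-1)^n := by
      intro n
      induction n with
      | zero => rw [lam0, θ0]; simp
      | succ n ih => exact (key n ih).1
    exact fun n => ⟨base n, base (n+1), (key n (base n)).2⟩
  let f : ℕ → ℝ → ℝ := fun n x => (-1)^n * θ x
  have df : ∀ n x, HasDerivAt (f n) ((-1)^n * θ' x) x := fun n x => (dθ x).const_mul _
  have cf : ∀ n, Continuous (f n) := fun n => cθ.const_mul _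
  have absf : ∀ n x, |f n x| = |θ x| := by
    intro n x; simp [f, abs_mul, abs_pow]
  have ds : ∀ n x y, lam n < x → x < y → y < lam (n+1) → |f n x| < 1 → f n y < f n x := by
    intro n x y hx hxy hy h
    refine desc (df n) (p := lam n) (q := lam (n+1)) ?_ hx hxy hy h
    intro z hzz hz1
    rw [absf] at hz1
    have h1 := hpos z hz1
    have h2 := (alt n).2.2 z hzz
    have hs := s2 n
    by_contra hcon
    have h3 : ((-1)^n * C z) * ((-1)^n * θ' z) ≤ 0 := mul_nonpos_of_nonpos_of_nonneg h2.le (not_lt.1 hcon)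
    have h4 : ((-1)^n * C z) * ((-1)^n * θ' z) = C z * θ' z := by linear_combination (C z * θ' z) * hs
    linarith
  have uniq : ∀ n x y, x ∈ Set.Ioo (lam n) (lam (n+1)) → y ∈ Set.Ioo (lam n) (lam (n+1)) →
      |f n x| < 1 → f n x = f n y → x = y := by
    intro n x y hx hy h e
    rcases lt_trichotomy x y with h1 | h1 | h1
    · exact absurd e (ds n x y hx.1 h1 hy.2 h).ne'
    · exact h1
    · exact absurd e (ds n y x hy.1 h1 hx.2 (e ▸ h)).ne
  have ang : ∀ j : ℕ, j < κ → (j * Real.pi / κ : ℝ) ∈ Set.Icc 0 Real.pi := by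
    intro j hj
    have hj' : (j:ℝ) ≤ κ := by exact_mod_cast hj.le
    have := Real.pi_pos
    refine ⟨by positivity, ?_⟩
    rw [div_le_iff₀ hκ0]
    nlinarith
  have coslt : ∀ i j : ℕ, i < j → j ≤ κ → Real.cos (j * Real.pi / κ) < Real.cos (i * Real.pi / κ) := by
    intro i j hij hj
    have hj' : (j:ℝ) ≤ κ := by exact_mod_cast hj
    have hij' : (i:ℝ) < j := by exact_mod_cast hij
    have := Real.pi_pos
    apply Real.cos_lt_cos_of_nonneg_of_le_pi (by positivity)
    · rw [div_le_iff₀ hκ0]; nlinarith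
    · gcongr
  have c0 : Real.cos ((0:ℕ) * Real.pi / κ) = 1 := by simp
  have cκ : Real.cos ((κ:ℕ) * Real.pi / κ) = -1 := by
    rw [mul_div_cancel_left₀ _ hκ0.ne', Real.cos_pi]
  have cosabs : ∀ j : ℕ, 0 < j → j < κ → |Real.cos (j * Real.pi / κ)| < 1 := by
    intro j h0 hj
    rw [abs_lt]
    constructor
    · have := coslt j κ hj le_rfl; rwa [cκ] at this
    · have := coslt 0 j h0 hj.le; rwa [c0] at this
  have cosflip : ∀ j : ℕ, 0 < j → j < κ → ∀ n : ℕ, ∃ i : ℕ, 0 < i ∧ i < κ ∧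
      (-1:ℝ)^n * Real.cos (j * Real.pi / κ) = Real.cos (i * Real.pi / κ) := by
    intro j h0 hj n
    rcases neg_one_pow_eq_or ℝ n with h | h
    · exact ⟨j, h0, hj, by rw [h, one_mul]⟩
    · refine ⟨κ - j, by omega, by omega, ?_⟩
      rw [h, Nat.cast_sub hj.le, neg_one_mul, ← Real.cos_pi_sub]
      congr 1
      field_simp
  have exE : ∀ n j : ℕ, ∃ x, j < κ → x ∈ Set.Ico (lam n) (lam (n+1)) ∧
      f n x = Real.cos (j * Real.pi / κ) ∧ (j = 0 → x = lam n) ∧ (0 < j → lam n < x) := by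
    intro n j
    have hl : lam n < lam (n+1) := hlam (Nat.lt_succ_self n)
    have f1 : f n (lam n) = 1 := by simp only [f, (alt n).1, s2]
    have f2 : f n (lam (n+1)) = -1 := by
      simp only [f, (alt n).2.1, pow_succ]; linear_combination - s2 n
    rcases Nat.eq_zero_or_pos j with rfl | hj0
    · exact ⟨lam n, fun _ => ⟨⟨le_rfl, hl⟩, by rw [f1, c0], fun _ => rfl, fun h => absurd h (lt_irrefl _)⟩⟩
    by_cases hj : j < κ
    · have hca := abs_lt.1 (cosabs j hj0 hj)
      obtain ⟨x, hx, hxe⟩ := intermediate_value_Ioo' hl.le (cf n).continuousOn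
        (show Real.cos (j * Real.pi / κ) ∈ Set.Ioo (f n (lam (n+1))) (f n (lam n)) by rw [f1, f2]; exact hca)
      exact ⟨x, fun _ => ⟨⟨hx.1.le, hx.2⟩, hxe, fun h => absurd h hj0.ne', fun _ => hx.1⟩⟩
    · exact ⟨0, fun h => absurd h hj⟩
  choose E hE using exE
  let e : ℕ → ℝ := fun m => E (m / κ) (m % κ)
  have hκp : 0 < κ := by omega
  have eval_e : ∀ n j, j < κ → e (κ * n + j) = E n j := by
    intro n j hj
    simp only [e]
    rw [Nat.mul_add_div hκp, Nat.div_eq_of_lt hj, Nat.mul_add_mod, Nat.mod_eq_of_lt hj, add_zero]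
  have split : ∀ m : ℕ, ∃ n j, j < κ ∧ m = κ * n + j :=
    fun m => ⟨m / κ, m % κ, Nat.mod_lt _ hκp, (Nat.div_add_mod m κ).symm⟩
  have eE0 : ∀ n, E n 0 = lam n := fun n => (hE n 0 hκp).2.2.1 rfl
  have emono : StrictMono e := by
    apply strictMono_nat_of_lt_succ
    intro m
    obtain ⟨n, j, hj, rfl⟩ := split m
    rw [eval_e n j hj]
    rcases Nat.lt_or_ge (j+1) κ with h | h
    · rw [add_assoc, eval_e n (j+1) h]
      obtain ⟨a1, a2, a3, a4⟩ := hE n j hj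
      obtain ⟨b1, b2, b3, b4⟩ := hE n (j+1) h
      rcases Nat.eq_zero_or_pos j with rfl | hj0
      · rw [eE0]; exact b4 (by omega)
      · have hlt := coslt j (j+1) (by omega) h.le
        rw [← a2, ← b2] at hlt
        by_contra hcon
        rcases (not_lt.1 hcon).lt_or_eq with h1 | h1
        · have := ds n _ _ (b4 (by omega)) h1 a1.2 (by rw [b2]; exact cosabs _ (by omega) h)
          linarith
        · rw [h1] at hlt; exact lt_irrefl _ hlt
    · have : κ * n + j + 1 = κ * (n+1) + 0 := by rw [mul_add]; omega
      rw [this, eval_e (n+1) 0 hκp, eE0]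
      exact (hE n j hj).1.2
  have unb : ∀ x, ∃ n, x < lam n := by
    by_contra hcon
    push Not at hcon
    obtain ⟨x, hx⟩ := hcon
    have hb : BddAbove (Set.range lam) := ⟨x, by rintro _ ⟨n, rfl⟩; exact hx n⟩
    have ht := tendsto_atTop_ciSup hlam.monotone hb
    have h1 := (cC.tendsto _).comp ht
    have h2 : C (⨆ i, lam i) = 0 := by
      refine tendsto_nhds_unique h1 ?_
      have : (C ∘ lam) = fun _ => 0 := funext Cl
      rw [this]; exact tendsto_const_nhds
    obtain ⟨n, hn⟩ := (hlr _).2 h2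
    have := le_ciSup hb (n+1)
    rw [← hn] at this
    exact absurd (hlam (Nat.lt_succ_self n)) (not_lt.2 this)
  have loc : ∀ x, 0 ≤ x → ∃ n, lam n ≤ x ∧ x < lam (n+1) := by
    intro x hx
    have hex := unb x
    classical
    have h1 := Nat.find_spec hex
    have h0 : Nat.find hex ≠ 0 := by
      intro h; rw [h, lam0] at h1; linarith
    obtain ⟨n, hn⟩ := Nat.exists_eq_succ_of_ne_zero h0
    refine ⟨n, not_lt.1 (Nat.find_min hex (by omega)), ?_⟩
    rw [hn] at h1; exact h1
  have fwd : ∀ m, C (c * e m) = 0 := by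
    intro m
    obtain ⟨n, j, hj, rfl⟩ := split m
    rw [eval_e n j hj, hself]
    rcases Nat.eq_zero_or_pos j with rfl | hj0
    · left; rw [eE0]; exact Cl n
    · right
      obtain ⟨i, i0, i1, hi⟩ := cosflip j hj0 hj n
      refine ⟨i, i0, i1, ?_⟩
      rw [← hi, ← (hE n j hj).2.1]
      simp only [f]
      linear_combination - θ (E n j) * s2 n
  have bwd : ∀ x, C (c * x) = 0 → ∃ m, e m = x := by
    intro x hx
    have hx0 : 0 ≤ x := by
      have := nonneg _ hx
      exact nonneg_of_mul_nonneg_right this hc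
    rcases (hself x).1 hx with h | ⟨j, j0, j1, hj⟩
    · obtain ⟨n, rfl⟩ := (hlr x).2 h
      exact ⟨κ * n + 0, by rw [eval_e n 0 hκp, eE0]⟩
    · obtain ⟨n, h1, h2⟩ := loc x hx0
      have hab := cosabs j j0 j1
      rw [← hj] at hab
      have hne : lam n ≠ x := by
        intro h
        rw [← h, (alt n).1] at hab
        simp at hab
      obtain ⟨i, i0, i1, hi⟩ := cosflip j j0 j1 n
      refine ⟨κ * n + i, ?_⟩
      rw [eval_e n i i1]
      obtain ⟨a1, a2, a3, a4⟩ := hE n i i1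
      refine (uniq n _ _ ⟨lt_of_le_of_ne h1 hne, h2⟩ ⟨a4 i0, a1.2⟩ (by rwa [absf]) ?_).symm
      rw [a2, ← hi, ← hj]
  have lam_e : lam = fun m => c * e m := by
    refine (hlam.range_inj (g := fun m => c * e m) (fun x y h => mul_lt_mul_of_pos_left (emono h) hc)).1 ?_
    ext x
    constructor
    · intro h
      have hx := (hlr x).1 h
      obtain ⟨m, hm⟩ := bwd (x / c) (by rwa [mul_div_cancel₀ _ hc.ne'])
      exact ⟨m, by show c * e m = x; rw [hm, mul_div_cancel₀ _ hc.ne']⟩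
    · rintro ⟨m, rfl⟩
      exact (hlr _).2 (fwd m)
  obtain ⟨k, hk⟩ := hev
  have hk2 : κ / 2 = k := by omega
  have hkκ : k < κ := by omega
  have cosk : Real.cos (k * Real.pi / κ) = 0 := by
    have : (κ:ℝ) = k + k := by exact_mod_cast hk
    have hk0 : (k:ℝ) ≠ 0 := by have : k ≠ 0 := by omega
                               exact_mod_cast this
    rw [this, ← Real.cos_pi_div_two]
    congr 1
    field_simp
    ring
  have sne : ∀ n : ℕ, ((-1:ℝ)^n) ≠ 0 := fun n => pow_ne_zero _ (by norm_num)
  have mu_e : mu = fun n => e (κ * n + k) := by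
    refine (hmu.range_inj (g := fun n => e (κ * n + k)) (fun x y h => emono (by
      have := Nat.mul_lt_mul_of_pos_left h hκp
      omega))).1 ?_
    ext x
    constructor
    · intro h
      have hx := (hmr x).1 h
      obtain ⟨m, hm⟩ := bwd x ((hself x).2 (Or.inr ⟨k, by omega, hkκ, by rw [hx, cosk]⟩))
      obtain ⟨n, j, hj, rfl⟩ := split m
      rw [eval_e n j hj] at hm
      have h2 := (hE n j hj).2.1
      simp only [f] at h2
      rw [hm, hx, mul_zero, ← cosk] at h2
      have : j = k := by
        rcases lt_trichotomy j k with h | h | h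
        · exact absurd h2 (coslt j k h hkκ.le).ne
        · exact h
        · exact absurd h2 (coslt k j h hj.le).ne'
      subst this
      exact ⟨n, by show e (κ * n + j) = x; rw [eval_e n j hj, hm]⟩
    · rintro ⟨n, rfl⟩
      refine (hmr _).2 ?_
      show θ (e (κ * n + k)) = 0
      rw [eval_e n k hkκ]
      have h2 := (hE n k hkκ).2.1
      rw [cosk] at h2
      exact (mul_eq_zero.1 h2).resolve_left (sne n)
  intro n
  rw [lam_e, mu_e, hk2]

end Cant

open Cant

theorem mixed_problem_spectral_periodicity (κ : ℕ) (a b : ℝ) (hκ : 2 ≤ κ)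
    (hκeven : Even κ)
    (ha : 0 < a) (ha' : a < 1 / κ) (hb : b = (1 - κ * a) / (κ - 1))
    (P : ℝ → ℝ) (hP : CantorType κ a b P) (hPmono : MonotoneOn P (Set.Icc 0 1))
    (μ : Measure ℝ)
    (hμ : ∀ x ∈ Set.Icc (0 : ℝ) 1, μ (Set.Icc 0 x) = ENNReal.ofReal (P x))
    (hμc : μ (Set.Icc (0 : ℝ) 1)ᶜ = 0)
    (lam : ℕ → ℝ) (hlam : StrictMono lam)
    (hlamrange : Set.range lam = {l : ℝ | IsEigen μ 0 0 l})
    (mu : ℕ → ℝ) (hmu : StrictMono mu)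
    (hmurange : Set.range mu = {l : ℝ | IsEigen μ 0 (2 * a / b) l}) :
    ∀ n : ℕ, lam (κ * n + κ / 2) = (κ / a) * mu n := by
  have H := mk_meas κ a b hκ ha ha' hb P hP hPmono μ hμ hμc
  have := H.prob
  have := H.noatom
  have hb0 := H.hb
  have hκ0 : (0:ℝ) < κ := by exact_mod_cast (by omega : 0 < κ)
  have hμ1 : μ.real (Set.Ioc 0 1) = 1 := by
    rw [Measure.real, H.ioc le_rfl zero_le_one le_rfl, H.P0, H.P1]; simp
  obtain ⟨A, B, C, D, I, J, K, F⟩ := exists_fund μ hμ1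
  have hAD := H.symm F
  set t := b / a with ht
  have hdet : ∀ x, A x * A x - B x * C x = 1 := by
    intro x; have := F.det x; rwa [← hAD] at this
  refine core hκ hκeven (c := κ / a) (by positivity) (C := C) (C' := fun x => C x * J x - D x * I x)
    (θ := fun x => A x + t / 2 * C x)
    (θ' := fun x => (A x * J x - B x * I x + (C x * K x - D x * J x)) / 2 + t / 2 * (C x * J x - D x * I x))
    F.dC ?_ ?_ ?_ F.C0 ?_ F.nonneg ?_ lam hlam ?_ mu hmu ?_
  · intro x
    have h1 := (((F.dA x).add (F.dD x)).div_const 2).add ((F.dC x).const_mul (t/2))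
    refine h1.congr_of_eventuallyEq (Filter.Eventually.of_forall fun y => ?_)
    show A y + t / 2 * C y = (A y + D y) / 2 + t / 2 * C y
    rw [← hAD]; ring
  · intro x hx
    have h1 := hdet x
    have h2 := F.Ipos x
    simp only [hx, ← hAD]
    rw [hx] at h1
    constructor
    · linear_combination h1
    · have : (A x + t / 2 * 0) * (0 * J x - A x * I x) = - I x := by linear_combination (-I x) * h1
      rw [this]; linarith
  · intro x hx
    have h1 := hdet x
    have h2 := F.Ipos x
    have h3 := F.quad x (t/2)
    have hx' : (A x + t / 2 * C x)^2 < 1 := by rw [sq_lt_one_iff_abs_lt_one]; exact hx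
    simp only [← hAD]
    have e : 2 * (C x * ((A x * J x - B x * I x + (C x * K x - A x * J x)) / 2 + t / 2 * (C x * J x - A x * I x)))
      = (1 - (A x + t / 2 * C x)^2) * I x + C x ^ 2 * ((t/2)^2 * I x + 2 * (t/2) * J x + K x) := by
      linear_combination (I x) * h1
    have h4 : 0 < (1 - (A x + t / 2 * C x)^2) * I x := mul_pos (by linarith) h2
    have h5 := mul_nonneg (sq_nonneg (C x)) h3
    linarith
  · simp [F.A0, F.C0]
  · intro x
    have h := (H.selfsim F (l := κ / a * x) (ν := x) (θ := A x + t / 2 * C x) (by field_simp)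
      (by rw [← hAD]; ring)).1
    rw [← U_zero_iff hκ]
    have h2 : C (κ / a * x) = 0 ↔ a * C (κ / a * x) = 0 := by simp [ha.ne']
    rw [h2, h, mul_eq_zero, or_comm]
  · intro x
    have : (∃ n, lam n = x) ↔ x ∈ Set.range lam := Iff.rfl
    rw [this, hlamrange, Set.mem_ofPred_eq, eigen_iff F, zero_mul, add_zero]
  · intro x
    have : (∃ n, mu n = x) ↔ x ∈ Set.range mu := Iff.rfl
    rw [this, hmurange, Set.mem_ofPred_eq, eigen_iff F]
    have e : C x + 2 * a / b * A x = 2 * a / b * (A x + t / 2 * C x) := by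
      rw [ht]; field_simp; ring
    rw [e, mul_eq_zero]
    have : 2 * a / b ≠ 0 := by positivity
    simp [this]
end

section
/- Let (λ_n)_{n∈ℕ} be a strictly increasing enumeration of all eigenvalues of the Neumann problem (γ₀ = γ₁ = 0) for the equation −y'' − λρy = 0 with weight ρ the distributional derivative of the Cantor-type self-similar function P with parameters κ, a, b, and let (μ_n)_{n∈ℕ} be a strictly increasing enumeration of all eigenvalues of the problem with constants γ₀ ≥ 0, γ₁ ≥ 0 for the same equation. Then the partial sums of the series Σ_{n=1}^∞ |ln μ_n − ln λ_n| are bounded: there exists C such that Σ_{n=1}^N |ln μ_n − ln λ_n| ≤ C for every N ≥ 1. -/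
open MeasureTheory

section Abstract

set_option linter.unusedSectionVars false

open scoped RealInnerProductSpace

variable {H L : Type*} [NormedAddCommGroup H] [InnerProductSpace ℝ H] [CompleteSpace H]
  [NormedAddCommGroup L] [InnerProductSpace ℝ L] [CompleteSpace L]

/-- Abstract spectral problem `A y = l J* J y` with simple eigenvalues enumerated by `l`. -/
structure SpecProb (A : H →L[ℝ] H) (J : H →L[ℝ] L) (l : ℕ → ℝ) : Prop where
  symm : ∀ y z, ⟪A y, z⟫ = ⟪y, A z⟫
  pos : ∀ y, 0 ≤ ⟪A y, y⟫
  coer : ∃ c : ℝ, 0 < c ∧ ∀ y, c * ‖y‖ ^ 2 ≤ ⟪A y, y⟫ + ‖J y‖ ^ 2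
  comp : IsCompactOperator J
  dense : ∀ f : L, (∀ y, ⟪f, J y⟫ = 0) → f = 0
  simple : ∃ e : H →L[ℝ] ℝ, ∀ (t : ℝ) (y : H), (∀ z, ⟪A y, z⟫ = t * ⟪J y, J z⟫) → e y = 0 → y = 0
  mono : StrictMono l
  range : Set.range l = {t | ∃ y : H, y ≠ 0 ∧ ∀ z, ⟪A y, z⟫ = t * ⟪J y, J z⟫}

variable {A : H →L[ℝ] H} {J : H →L[ℝ] L} {l : ℕ → ℝ}

theorem SpecProb.J_ne (h : SpecProb A J l) {t : ℝ} {y : H} (hy : y ≠ 0)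
    (he : ∀ z, ⟪A y, z⟫ = t * ⟪J y, J z⟫) : J y ≠ 0 := by
  intro h0
  obtain ⟨c, hc, hcy⟩ := h.coer
  have h1 := hcy y
  rw [he y, h0] at h1
  simp at h1
  have : 0 < ‖y‖ := norm_pos_iff.mpr hy
  have : 0 < c * ‖y‖ ^ 2 := by positivity
  linarith

theorem SpecProb.nonneg (h : SpecProb A J l) (n : ℕ) : 0 ≤ l n := by
  have : l n ∈ {t | ∃ y : H, y ≠ 0 ∧ ∀ z, ⟪A y, z⟫ = t * ⟪J y, J z⟫} := by
    rw [← h.range]; exact ⟨n, rfl⟩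
  obtain ⟨y, hy, he⟩ := this
  have h1 := h.J_ne hy he
  have h2 := h.pos y
  rw [he y, real_inner_self_eq_norm_sq] at h2
  have : 0 < ‖J y‖ := norm_pos_iff.mpr h1
  by_contra hneg
  push Not at hneg
  have : l n * ‖J y‖ ^ 2 < 0 := mul_neg_of_neg_of_pos hneg (by positivity)
  linarith

theorem SpecProb.exists_basis (h : SpecProb A J l) :
    ∃ v : ℕ → H, (∀ j z, ⟪A (v j), z⟫ = l j * ⟪J (v j), J z⟫) ∧
      Orthonormal ℝ (fun j => J (v j)) ∧ (∀ f : L, (∀ j, ⟪f, J (v j)⟫ = 0) → f = 0) := by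
  have hex : ∀ j, ∃ y : H, (∀ z, ⟪A y, z⟫ = l j * ⟪J y, J z⟫) ∧ ‖J y‖ = 1 := by
    intro j
    have : l j ∈ {t | ∃ y : H, y ≠ 0 ∧ ∀ z, ⟪A y, z⟫ = t * ⟪J y, J z⟫} := by
      rw [← h.range]; exact ⟨j, rfl⟩
    obtain ⟨y, hy, he⟩ := this
    have h1 := h.J_ne hy he
    have h2 : 0 < ‖J y‖ := norm_pos_iff.mpr h1
    refine ⟨(‖J y‖)⁻¹ • y, ?_, ?_⟩
    · intro z
      simp only [map_smul, inner_smul_left, he z]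
      simp; ring
    · rw [map_smul, norm_smul, norm_inv, norm_norm]
      field_simp
  choose v hv hv1 using hex
  refine ⟨v, hv, ⟨hv1, ?_⟩, ?_⟩
  · intro i j hij
    have h1 := hv i (v j)
    have h2 := hv j (v i)
    rw [h.symm, real_inner_comm] at h1
    have hc : ⟪J (v j), J (v i)⟫ = ⟪J (v i), J (v j)⟫ := real_inner_comm _ _
    rw [h1, hc] at h2
    have hne : l i ≠ l j := fun hh => hij (h.mono.injective hh)
    have : (l i - l j) * ⟪J (v i), J (v j)⟫ = 0 := by linarith [h2]
    rcases mul_eq_zero.mp this with h3 | h3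
    · exact absurd (sub_eq_zero.mp h3) hne
    · exact h3
  · intro f0 hf0
    obtain ⟨c, hc, hcy⟩ := h.coer
    let Jt : L →L[ℝ] H := ContinuousLinearMap.adjoint J
    let S : H →L[ℝ] H := A + Jt ∘L J
    have hSi : ∀ y z, ⟪S y, z⟫ = ⟪A y, z⟫ + ⟪J y, J z⟫ := by
      intro y z
      simp [S, Jt, inner_add_left, ContinuousLinearMap.adjoint_inner_left]
    let B : H →L[ℝ] H →L[ℝ] ℝ := (innerSL ℝ : H →L[ℝ] H →L[ℝ] ℝ).comp S
    have hB : IsCoercive B := by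
      refine ⟨c, hc, fun u => ?_⟩
      have : B u u = ⟪S u, u⟫ := rfl
      rw [this, hSi, real_inner_self_eq_norm_sq]
      have := hcy u
      nlinarith
    let Se := hB.continuousLinearEquivOfBilin
    have hSe : ∀ y z, ⟪Se y, z⟫ = ⟪A y, z⟫ + ⟪J y, J z⟫ := by
      intro y z
      rw [← hSi]
      exact hB.continuousLinearEquivOfBilin_apply y z
    let R : H →L[ℝ] H := Se.symm
    have hR : ∀ x, Se (R x) = x := fun x => Se.apply_symm_apply x
    let K : L →L[ℝ] L := J ∘L (R ∘L Jt)
    have hKc : IsCompactOperator (K : L → L) := h.comp.comp_clm (R ∘L Jt)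
    have hKs : (K : L →ₗ[ℝ] L).IsSymmetric := by
      intro f g
      show ⟪J (R (Jt f)), g⟫ = ⟪f, J (R (Jt g))⟫
      have e1 : ⟪J (R (Jt f)), g⟫ = ⟪R (Jt f), Jt g⟫ :=
        (ContinuousLinearMap.adjoint_inner_right J _ _).symm
      have e2 : ⟪f, J (R (Jt g))⟫ = ⟪Jt f, R (Jt g)⟫ :=
        (ContinuousLinearMap.adjoint_inner_left J _ _).symm
      rw [e1, e2]
      conv_lhs => rw [← hR (Jt g)]
      conv_rhs => rw [← hR (Jt f)]
      rw [real_inner_comm, hSe, hSe, h.symm, real_inner_comm, real_inner_comm (J _)]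
    have hmain := ContinuousLinearMap.orthogonalComplement_iSup_eigenspaces_eq_bot hKc hKs
    have : f0 ∈ (⨆ k, Module.End.eigenspace (K : L →ₗ[ℝ] L) k)ᗮ := by
      rw [← Submodule.iInf_orthogonal]
      rw [Submodule.mem_iInf]
      intro k
      rw [Submodule.mem_orthogonal]
      intro f hf
      rw [Module.End.mem_eigenspace_iff] at hf
      have hf : J (R (Jt f)) = k • f := hf
      set y := R (Jt f) with hy
      have hyS : ∀ z, ⟪A y, z⟫ + ⟪J y, J z⟫ = ⟪f, J z⟫ := by
        intro z
        rw [← hSe, hy, hR]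
        exact ContinuousLinearMap.adjoint_inner_left J _ _
      by_cases hk : k = 0
      · rw [hk, zero_smul] at hf
        have h1 := hyS y
        rw [hf] at h1
        have h2 := hcy y
        rw [hf] at h2
        simp only [inner_zero_right, add_zero, norm_zero] at h1 h2
        rw [h1] at h2
        have hy0 : y = 0 := by
          by_contra hne
          have : 0 < ‖y‖ := norm_pos_iff.mpr hne
          have : 0 < c * ‖y‖ ^ 2 := by positivity
          norm_num at h2
          linarith
        have : f = 0 := h.dense f fun z => by
          rw [← hyS z, hy0]; simp
        rw [this, inner_zero_left]
      · have hfy : f = k⁻¹ • J y := by rw [hf, smul_smul, inv_mul_cancel₀ hk, one_smul]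
        have hE : ∀ z, ⟪A y, z⟫ = (k⁻¹ - 1) * ⟪J y, J z⟫ := by
          intro z
          have := hyS z
          rw [hfy, inner_smul_left] at this
          simp at this
          linarith
        by_cases hy0 : y = 0
        · rw [hfy, hy0]; simp
        have : (k⁻¹ - 1) ∈ Set.range l := by
          rw [h.range]; exact ⟨y, hy0, hE⟩
        obtain ⟨j, hj⟩ := this
        obtain ⟨e, he⟩ := h.simple
        have hvj0 : e (v j) ≠ 0 := by
          intro h0
          have := he _ _ (hv j) h0
          have h1 := hv1 j
          rw [this] at h1
          simp at h1
        have hlin : y - (e y / e (v j)) • v j = 0 := by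
          apply he (l j)
          · intro z
            have h1 := hE z
            rw [← hj] at h1
            simp only [map_sub, map_smul, inner_sub_left, inner_smul_left, h1, hv j z]
            ring
          · simp only [map_sub, map_smul, smul_eq_mul]
            field_simp
            ring
        rw [sub_eq_zero] at hlin
        rw [hfy, hlin, map_smul, inner_smul_left, inner_smul_left, real_inner_comm, hf0 j]
        simp
    rw [hmain] at this
    simpa using this

theorem spec_lower (hs : ∀ y z, ⟪A y, z⟫ = ⟪y, A z⟫) (hpos : ∀ y, 0 ≤ ⟪A y, y⟫)
    (hm : Monotone l) (v : ℕ → H)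
    (hv : ∀ j z, ⟪A (v j), z⟫ = l j * ⟪J (v j), J z⟫)
    (ho : Orthonormal ℝ (fun j => J (v j)))
    (hd : ∀ f : L, (∀ j, ⟪f, J (v j)⟫ = 0) → f = 0) (u : H) (m : ℕ) :
    l m * ‖J u‖ ^ 2 - ∑ j ∈ Finset.range (m + 1), (l m - l j) * ⟪J (v j), J u⟫ ^ 2
      ≤ ⟪A u, u⟫ := by
  -- Bessel for the energy
  have hb : ∀ M, ∑ j ∈ Finset.range M, l j * ⟪J (v j), J u⟫ ^ 2 ≤ ⟪A u, u⟫ := by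
    intro M
    set w := ∑ j ∈ Finset.range M, ⟪J (v j), J u⟫ • v j with hw
    have h0 := hpos (u - w)
    have h1 : ∀ z, ⟪A w, z⟫ = ∑ j ∈ Finset.range M, ⟪J (v j), J u⟫ * (l j * ⟪J (v j), J z⟫) := by
      intro z
      rw [hw, map_sum, sum_inner]
      refine Finset.sum_congr rfl fun j _ => ?_
      rw [map_smul, inner_smul_left, hv]; simp
    have h2 : ∀ j ∈ Finset.range M, ⟪J (v j), J w⟫ = ⟪J (v j), J u⟫ := by
      intro j hj
      rw [hw, map_sum]
      simp only [map_smul]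
      exact ho.inner_right_sum _ hj
    have h3 : ⟪A w, w⟫ = ∑ j ∈ Finset.range M, l j * ⟪J (v j), J u⟫ ^ 2 := by
      rw [h1]
      refine Finset.sum_congr rfl fun j hj => ?_
      rw [h2 j hj]; ring
    have h4 : ⟪A w, u⟫ = ∑ j ∈ Finset.range M, l j * ⟪J (v j), J u⟫ ^ 2 := by
      rw [h1]
      refine Finset.sum_congr rfl fun j hj => ?_
      ring
    have h5 : ⟪A u, w⟫ = ⟪A w, u⟫ := by rw [hs, real_inner_comm]
    rw [map_sub, inner_sub_left, inner_sub_right, inner_sub_right, h5, h3, h4] at h0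
    linarith
  have hbot : (Submodule.span ℝ (Set.range fun j => J (v j)))ᗮ = ⊥ := by
    rw [Submodule.eq_bot_iff]
    intro f hf
    refine hd f fun j => ?_
    rw [real_inner_comm]
    exact (Submodule.mem_orthogonal _ _).1 hf _ (Submodule.subset_span ⟨j, rfl⟩)
  have hsum := (HilbertBasis.mkOfOrthogonalEqBot ho hbot).hasSum_inner_mul_inner (J u) (J u)
  rw [HilbertBasis.coe_mkOfOrthogonalEqBot] at hsum
  have hsum' := (hsum.tendsto_sum_nat).const_mul (l m)
  rw [real_inner_self_eq_norm_sq] at hsum'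
  rw [sub_le_iff_le_add]
  refine le_of_tendsto hsum' ?_
  filter_upwards [Filter.eventually_ge_atTop (m + 1)] with M hM
  have hb' := hb M
  rw [Finset.mul_sum]
  rw [← Finset.sum_range_add_sum_Ico _ hM] at hb' ⊢
  have e1 : ∑ j ∈ Finset.Ico (m + 1) M, l m * (⟪J u, J (v j)⟫ * ⟪J (v j), J u⟫) ≤
      ∑ j ∈ Finset.Ico (m + 1) M, l j * ⟪J (v j), J u⟫ ^ 2 := by
    refine Finset.sum_le_sum fun j hj => ?_
    rw [real_inner_comm (J (v j))]
    have : l m ≤ l j := hm (by have := (Finset.mem_Ico.1 hj).1; omega)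
    nlinarith [sq_nonneg ⟪J (v j), J u⟫]
  have e2 : ∑ j ∈ Finset.range (m + 1), l m * (⟪J u, J (v j)⟫ * ⟪J (v j), J u⟫) =
      ∑ j ∈ Finset.range (m + 1), l j * ⟪J (v j), J u⟫ ^ 2 +
      ∑ j ∈ Finset.range (m + 1), (l m - l j) * ⟪J (v j), J u⟫ ^ 2 := by
    rw [← Finset.sum_add_distrib]
    refine Finset.sum_congr rfl fun j hj => ?_
    rw [real_inner_comm (J (v j))]; ring
  linarith

theorem abel_nonneg (w x : ℕ → ℝ) (hw : Antitone w)
    (hx : ∀ m, 0 ≤ ∑ n ∈ Finset.range (m + 1), x n) (N : ℕ) :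
    w N * ∑ n ∈ Finset.range (N + 1), x n ≤ ∑ n ∈ Finset.range (N + 1), w n * x n := by
  induction N with
  | zero => simp
  | succ N ih =>
    rw [Finset.sum_range_succ, Finset.sum_range_succ (fun n => w n * x n)]
    have := hw (Nat.le_succ N)
    have h2 := hx N
    have : w (N+1) * ∑ n ∈ Finset.range (N + 1), x n ≤ w N * ∑ n ∈ Finset.range (N + 1), x n :=
      mul_le_mul_of_nonneg_right this h2
    nlinarith

theorem abstract_main {A₁ : H →L[ℝ] H} {m : ℕ → ℝ}
    (h0 : SpecProb A J l) (h1 : SpecProb A₁ J m) (g₀ g₁ : ℝ) (hg₀ : 0 ≤ g₀) (hg₁ : 0 ≤ g₁)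
    (p q : H) (hA : ∀ y, ⟪A₁ y, y⟫ = ⟪A y, y⟫ + (g₀ * ⟪p, y⟫ ^ 2 + g₁ * ⟪q, y⟫ ^ 2)) :
    (∀ n, l n ≤ m n) ∧ ∃ C, ∀ N, ∑ n ∈ Finset.range (N + 1), (m n - l n) / (l n + 1) ≤ C := by
  obtain ⟨u, hu, huo, hud⟩ := h0.exists_basis
  obtain ⟨v, hv, hvo, hvd⟩ := h1.exists_basis
  have hu1 : ∀ n, ‖J (u n)‖ = 1 := huo.1
  constructor
  · intro n
    let F : (Fin (n + 1) → ℝ) →ₗ[ℝ] (Fin n → ℝ) :=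
      { toFun := fun d i => ⟪J (u i), ∑ j, d j • J (v j)⟫
        map_add' := by
          intro x y; ext i
          simp [add_smul, Finset.sum_add_distrib, inner_add_right]
        map_smul' := by
          intro r x; ext i
          simp only [Pi.smul_apply, smul_eq_mul, mul_smul, ← Finset.smul_sum, inner_smul_right,
            RingHom.id_apply] }
    have hk : LinearMap.ker F ≠ ⊥ := LinearMap.ker_ne_bot_of_finrank_lt (by simp)
    obtain ⟨d, hd, hd0⟩ := (Submodule.ne_bot_iff _).1 hk
    have hd' : ∀ i : Fin n, ⟪J (u i), ∑ j, d j • J (v j)⟫ = 0 := fun i => congrFun (LinearMap.mem_ker.1 hd) i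
    set w : H := ∑ j, d j • v j with hw
    have hJw : J w = ∑ j, d j • J (v j) := by rw [hw, map_sum]; simp
    have hvo' : Orthonormal ℝ (fun j : Fin (n+1) => J (v j)) := hvo.comp _ Fin.val_injective
    have hn : ‖J w‖ ^ 2 = ∑ j, d j ^ 2 := by
      rw [← real_inner_self_eq_norm_sq, hJw, hvo'.inner_sum]
      simp [sq]
    have hAw : ⟪A₁ w, w⟫ = ∑ j : Fin (n + 1), m j * d j ^ 2 := by
      conv_lhs => rw [hw, map_sum, sum_inner]
      refine Finset.sum_congr rfl fun j _ => ?_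
      rw [map_smul, inner_smul_left, ← hw, hv, hJw, hvo'.inner_right_fintype]
      simp; ring
    have hAle : ⟪A₁ w, w⟫ ≤ m n * ‖J w‖ ^ 2 := by
      rw [hAw, hn, Finset.mul_sum]
      refine Finset.sum_le_sum fun j _ => ?_
      have : m j ≤ m n := h1.mono.monotone (by have := j.2; omega)
      exact mul_le_mul_of_nonneg_right this (sq_nonneg _)
    have hlow := spec_lower h0.symm h0.pos h0.mono.monotone u hu huo hud w n
    have hz : ∑ j ∈ Finset.range (n + 1), (l n - l j) * ⟪J (u j), J w⟫ ^ 2 = 0 := by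
      refine Finset.sum_eq_zero fun j hj => ?_
      rcases Nat.lt_succ_iff_lt_or_eq.1 (Finset.mem_range.1 hj) with h | h
      · have := hd' ⟨j, h⟩
        rw [hJw]
        simp only at this
        rw [this]; simp
      · rw [h]; simp
    rw [hz, sub_zero] at hlow
    have hpos : 0 < ‖J w‖ ^ 2 := by
      rw [hn]
      obtain ⟨i, hi⟩ := Function.ne_iff.1 hd0
      refine Finset.sum_pos' (fun j _ => sq_nonneg _) ⟨i, Finset.mem_univ _, ?_⟩
      have : d i ≠ 0 := hi
      positivity
    have h3 : ⟪A w, w⟫ ≤ ⟪A₁ w, w⟫ := by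
      rw [hA]
      have : 0 ≤ g₀ * ⟪p, w⟫ ^ 2 + g₁ * ⟪q, w⟫ ^ 2 := by positivity
      linarith
    exact le_of_mul_le_mul_right (hlow.trans (h3.trans hAle)) hpos
  · obtain ⟨c, hc, hcy⟩ := h0.coer
    have hl : ∀ n, 0 < l n + 1 := fun n => by linarith [h0.nonneg n]
    have bess : ∀ (p : H) (N : ℕ), ∑ n ∈ Finset.range (N + 1), (l n + 1)⁻¹ * ⟪p, u n⟫ ^ 2
        ≤ ‖p‖ ^ 2 / c := by
      intro p N
      set s := Finset.range (N + 1)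
      set Q := ∑ n ∈ s, (l n + 1)⁻¹ * ⟪p, u n⟫ ^ 2 with hQ
      set z : H := ∑ n ∈ s, ((l n + 1)⁻¹ * ⟪p, u n⟫) • u n with hz
      have hpz : ⟪p, z⟫ = Q := by
        rw [hz, inner_sum]
        refine Finset.sum_congr rfl fun j _ => ?_
        rw [inner_smul_right]; ring
      have hJz : ∀ n ∈ s, ⟪J (u n), J z⟫ = (l n + 1)⁻¹ * ⟪p, u n⟫ := by
        intro n hn
        rw [hz, map_sum]
        simp only [map_smul]
        exact huo.inner_right_sum _ hn
      have hS : ⟪A z, z⟫ + ‖J z‖ ^ 2 = Q := by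
        rw [← real_inner_self_eq_norm_sq]
        have e1 : ⟪A z, z⟫ = ∑ n ∈ s, ((l n + 1)⁻¹ * ⟪p, u n⟫) * (l n * ((l n + 1)⁻¹ * ⟪p, u n⟫)) := by
          conv_lhs => rw [hz, map_sum, sum_inner]
          refine Finset.sum_congr rfl fun j hj => ?_
          rw [map_smul, inner_smul_left, ← hz, hu, hJz j hj]; simp
        have e2 : ⟪J z, J z⟫ = ∑ n ∈ s, ((l n + 1)⁻¹ * ⟪p, u n⟫) * ((l n + 1)⁻¹ * ⟪p, u n⟫) := by
          conv_lhs => rw [hz, map_sum, sum_inner]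
          refine Finset.sum_congr rfl fun j hj => ?_
          rw [map_smul, inner_smul_left, ← map_sum, ← hz, hJz j hj]; simp
        rw [e1, e2, hQ, ← Finset.sum_add_distrib]
        refine Finset.sum_congr rfl fun j hj => ?_
        have := (hl j).ne'
        field_simp
      have h4 := hcy z
      rw [hS] at h4
      have h5 : Q ≤ ‖p‖ * ‖z‖ := by rw [← hpz]; exact real_inner_le_norm _ _
      rw [le_div_iff₀ hc]
      have hQ0 : 0 ≤ Q := Finset.sum_nonneg fun n _ => by
        have := hl n
        positivity
      -- Q^2 c ≤ |p|^2 c|z|^2 ≤ |p|^2 Q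
      by_cases hQ1 : Q = 0
      · rw [hQ1]; simp
      have hQp : 0 < Q := lt_of_le_of_ne hQ0 (Ne.symm hQ1)
      have h6 : Q ^ 2 ≤ (‖p‖ * ‖z‖) ^ 2 := by gcongr
      have h7 : Q * (Q * c) ≤ Q * ‖p‖ ^ 2 := by
        have := mul_le_mul_of_nonneg_left h4 (sq_nonneg ‖p‖)
        nlinarith
      exact le_of_mul_le_mul_left h7 hQp
    refine ⟨g₀ * (‖p‖ ^ 2 / c) + g₁ * (‖q‖ ^ 2 / c), fun N => ?_⟩
    have hE : ∀ n, ⟪A₁ (u n), u n⟫ = l n + (g₀ * ⟪p, u n⟫ ^ 2 + g₁ * ⟪q, u n⟫ ^ 2) := by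
      intro n
      rw [hA, hu, real_inner_self_eq_norm_sq, hu1]; ring
    have kyfan : ∀ M, 0 ≤ ∑ n ∈ Finset.range (M + 1), (⟪A₁ (u n), u n⟫ - m n) := by
      intro M
      have hlow : ∀ n, m M - ∑ j ∈ Finset.range (M + 1), (m M - m j) * ⟪J (v j), J (u n)⟫ ^ 2
          ≤ ⟪A₁ (u n), u n⟫ := by
        intro n
        have := spec_lower h1.symm h1.pos h1.mono.monotone v hv hvo hvd (u n) M
        rw [hu1] at this
        linarith
      have hsum := Finset.sum_le_sum fun n (_ : n ∈ Finset.range (M + 1)) => hlow n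
      rw [Finset.sum_sub_distrib, Finset.sum_comm] at hsum
      have hle : ∑ j ∈ Finset.range (M + 1), ∑ n ∈ Finset.range (M + 1),
          (m M - m j) * ⟪J (v j), J (u n)⟫ ^ 2 ≤ ∑ j ∈ Finset.range (M + 1), (m M - m j) := by
        refine Finset.sum_le_sum fun j hj => ?_
        rw [← Finset.mul_sum]
        have h8 : m j ≤ m M := h1.mono.monotone (by have := Finset.mem_range.1 hj; omega)
        have h9 : ∑ n ∈ Finset.range (M + 1), ⟪J (v j), J (u n)⟫ ^ 2 ≤ 1 := by
          have := huo.sum_inner_products_le (J (v j)) (s := Finset.range (M + 1))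
          rw [hvo.1 j] at this
          simpa [real_inner_comm] using this
        nlinarith
      rw [Finset.sum_sub_distrib] at hle ⊢
      linarith
    have habel := abel_nonneg (fun n => (l n + 1)⁻¹) _ (by
      intro i j hij
      have := h0.mono.monotone hij
      exact inv_anti₀ (hl i) (by linarith)) kyfan N
    have hge : 0 ≤ (l N + 1)⁻¹ * ∑ n ∈ Finset.range (N + 1), (⟪A₁ (u n), u n⟫ - m n) :=
      mul_nonneg (inv_nonneg.2 (hl N).le) (kyfan N)
    have h10 := hge.trans habel
    have h11 : ∑ n ∈ Finset.range (N + 1), (l n + 1)⁻¹ * (⟪A₁ (u n), u n⟫ - m n) =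
        g₀ * ∑ n ∈ Finset.range (N + 1), (l n + 1)⁻¹ * ⟪p, u n⟫ ^ 2 +
        g₁ * ∑ n ∈ Finset.range (N + 1), (l n + 1)⁻¹ * ⟪q, u n⟫ ^ 2 -
        ∑ n ∈ Finset.range (N + 1), (m n - l n) / (l n + 1) := by
      rw [Finset.mul_sum, Finset.mul_sum, ← Finset.sum_add_distrib, ← Finset.sum_sub_distrib]
      refine Finset.sum_congr rfl fun n _ => ?_
      rw [hE, div_eq_mul_inv]; ring
    have h12 := mul_le_mul_of_nonneg_left (bess p N) hg₀
    have h13 := mul_le_mul_of_nonneg_left (bess q N) hg₁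
    linarith

theorem log_of_abstract {l m : ℕ → ℝ} (hl : StrictMono l) (hl0 : 0 ≤ l 0)
    (h : ∀ n, l n ≤ m n)
    (hC : ∃ C, ∀ N, ∑ n ∈ Finset.range (N + 1), (m n - l n) / (l n + 1) ≤ C) :
    ∃ C : ℝ, ∀ N : ℕ, 1 ≤ N →
      ∑ n ∈ Finset.Icc 1 N, |Real.log (m n) - Real.log (l n)| ≤ C := by
  obtain ⟨C, hC⟩ := hC
  have hl1 : 0 < l 1 := lt_of_le_of_lt hl0 (hl Nat.zero_lt_one)
  have hln : ∀ n, 0 ≤ l n := fun n => hl0.trans (hl.monotone (Nat.zero_le n))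
  refine ⟨(1 + 1 / l 1) * C, fun N hN => ?_⟩
  have h1 : ∀ n ∈ Finset.Icc 1 N, |Real.log (m n) - Real.log (l n)| ≤
      (1 + 1 / l 1) * ((m n - l n) / (l n + 1)) := by
    intro n hn
    have hn1 := (Finset.mem_Icc.1 hn).1
    have hle : l 1 ≤ l n := hl.monotone hn1
    have hlp : 0 < l n := lt_of_lt_of_le hl1 hle
    have hmp : 0 < m n := lt_of_lt_of_le hlp (h n)
    rw [abs_of_nonneg (sub_nonneg.2 (Real.log_le_log hlp (h n))), ← Real.log_div hmp.ne' hlp.ne']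
    have e1 := Real.log_le_sub_one_of_pos (div_pos hmp hlp)
    refine e1.trans ?_
    have e2 : m n / l n - 1 = (m n - l n) / (l n) := by field_simp
    rw [e2]
    have e3 : (m n - l n) / l n = ((l n + 1) / l n) * ((m n - l n) / (l n + 1)) := by
      have : l n + 1 ≠ 0 := by linarith
      field_simp
    rw [e3]
    have e4 : (l n + 1) / l n ≤ 1 + 1 / l 1 := by
      rw [add_div, div_self hlp.ne']
      gcongr
    have e5 : 0 ≤ (m n - l n) / (l n + 1) := div_nonneg (sub_nonneg.2 (h n)) (by linarith)
    exact mul_le_mul_of_nonneg_right e4 e5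
  refine (Finset.sum_le_sum h1).trans ?_
  rw [← Finset.mul_sum]
  have h2 : ∑ n ∈ Finset.Icc 1 N, (m n - l n) / (l n + 1) ≤
      ∑ n ∈ Finset.range (N + 1), (m n - l n) / (l n + 1) := by
    refine Finset.sum_le_sum_of_subset_of_nonneg ?_ ?_
    · intro n hn
      have := (Finset.mem_Icc.1 hn).2
      exact Finset.mem_range.2 (by omega)
    · intro n _ _
      exact div_nonneg (sub_nonneg.2 (h n)) (by linarith [hln n])
  have : 0 ≤ 1 + 1 / l 1 := by positivity
  exact mul_le_mul_of_nonneg_left (h2.trans (hC N)) this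

end Abstract

section Concrete

open scoped RealInnerProductSpace

/-- Operator `h ↦ (x ↦ ⟪h, k x⟫)`. -/
noncomputable def JJ {H : Type*} [NormedAddCommGroup H] [InnerProductSpace ℝ H] (μ : Measure ℝ)
    (k : Lp H 2 μ) : H →L[ℝ] Lp ℝ 2 μ :=
  (ContinuousLinearMap.compLpL₂ 2 μ (innerSL ℝ : H →L[ℝ] H →L[ℝ] ℝ)).flip k

theorem JJ_coe {H : Type*} [NormedAddCommGroup H] [InnerProductSpace ℝ H] (μ : Measure ℝ)
    (k : Lp H 2 μ) (h : H) : JJ μ k h =ᵐ[μ] fun x => ⟪k x, h⟫ := by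
  have h1 : JJ μ k h = (innerSL ℝ h : H →L[ℝ] ℝ).compLp k := rfl
  rw [h1]
  filter_upwards [ContinuousLinearMap.coeFn_compLp (innerSL ℝ h : H →L[ℝ] ℝ) k] with x hx
  rw [hx, innerSL_apply_apply, real_inner_comm]

theorem JJ_compact {H : Type*} [NormedAddCommGroup H] [InnerProductSpace ℝ H] (μ : Measure ℝ)
    (k : Lp H 2 μ) : IsCompactOperator (JJ μ k) := by
  refine Lp.induction (by norm_num) (fun k : Lp H 2 μ => IsCompactOperator (JJ μ k)) ?_ ?_ ?_ k
  · intro c s hs hμs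
    have : JJ μ (Lp.simpleFunc.indicatorConst 2 hs hμs.ne c : Lp H 2 μ) =
        (ContinuousLinearMap.toSpanSingleton ℝ (indicatorConstLp 2 hs hμs.ne (1 : ℝ))).comp
          (innerSL ℝ c : H →L[ℝ] ℝ) := by
      ext1 h
      apply Lp.ext
      rw [Lp.simpleFunc.coe_indicatorConst]
      have h1 := JJ_coe μ (indicatorConstLp 2 hs hμs.ne c) h
      have h2 := Lp.coeFn_smul (⟪c, h⟫) (indicatorConstLp 2 hs hμs.ne (1 : ℝ))
      filter_upwards [h1, h2, indicatorConstLp_coeFn (hs := hs) (hμs := hμs.ne) (p := 2) (c := c),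
        indicatorConstLp_coeFn (hs := hs) (hμs := hμs.ne) (p := 2) (c := (1:ℝ))] with x a1 a2 a3 a4
      rw [a1, a3]
      show _ = (⟪c, h⟫ • indicatorConstLp 2 hs hμs.ne (1 : ℝ) : Lp ℝ 2 μ) x
      rw [a2, Pi.smul_apply, a4]
      by_cases hx : x ∈ s <;> simp [hx]
    rw [this]
    have hI : IsCompactOperator (innerSL ℝ c : H →L[ℝ] ℝ) :=
      isCompactOperator_of_locallyCompactSpace_dom (innerSL ℝ c : H →L[ℝ] ℝ)
    exact hI.clm_comp (ContinuousLinearMap.toSpanSingleton ℝ (indicatorConstLp 2 hs hμs.ne (1 : ℝ)))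
  · intro f g hf hg _ h1 h2
    have : JJ μ (MemLp.toLp f hf + MemLp.toLp g hg) = JJ μ (MemLp.toLp f hf) + JJ μ (MemLp.toLp g hg) :=
      map_add _ _ _
    rw [this]
    exact h1.add h2
  · have hc : Continuous (fun k : Lp H 2 μ => JJ μ k) :=
      ((ContinuousLinearMap.compLpL₂ 2 μ (innerSL ℝ : H →L[ℝ] H →L[ℝ] ℝ)).flip).continuous
    exact (isClosed_setOfPred_isCompactOperator (𝕜₁ := ℝ) (σ₁₂ := RingHom.id ℝ)
      (M₁ := H) (M₂ := Lp ℝ 2 μ)).preimage hc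

noncomputable def nu : Measure ℝ := Measure.dirac 0 + volume.restrict (Set.Ioc (0:ℝ) 1)

instance : IsFiniteMeasure nu := by unfold nu; infer_instance

noncomputable def kk (x : ℝ) : Lp ℝ 2 nu :=
  indicatorConstLp 2 (measurableSet_Iic : MeasurableSet (Set.Iic (max x 0)))
    (measure_ne_top _ _) (1 : ℝ)

theorem nu_ae {p : ℝ → Prop} : (∀ᵐ x ∂nu, p x) ↔
    p 0 ∧ ∀ᵐ x ∂(volume.restrict (Set.Ioc (0:ℝ) 1)), p x := by
  unfold nu
  rw [ae_add_measure_iff, ae_dirac_eq]; rfl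

theorem nu_real {a : ℝ} (ha : 0 ≤ a) (ha1 : a ≤ 1) : nu.real (Set.Iic a) = 1 + a := by
  have h1 : nu (Set.Iic a) = ENNReal.ofReal (1 + a) := by
    unfold nu
    rw [Measure.add_apply, Measure.restrict_apply measurableSet_Iic,
      Measure.dirac_apply' _ measurableSet_Iic]
    have : Set.Iic a ∩ Set.Ioc 0 1 = Set.Ioc 0 a := by
      ext t; simp; constructor
      · rintro ⟨h1, h2, h3⟩; exact ⟨h2, h1⟩
      · rintro ⟨h1, h2⟩; exact ⟨h2, h1, h2.trans ha1⟩
    rw [this, Real.volume_Ioc, ENNReal.ofReal_add (by norm_num) ha]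
    simp [ha]
  rw [measureReal_def, h1, ENNReal.toReal_ofReal (by linarith)]

theorem kk_inner {x y : ℝ} (hx : 0 ≤ x) (hxy : x ≤ y) (hx1 : x ≤ 1) : ⟪kk x, kk y⟫ = 1 + x := by
  unfold kk
  rw [L2.inner_indicatorConstLp_indicatorConstLp, Set.Iic_inter_Iic, max_eq_left hx,
    max_eq_left (hx.trans hxy), min_eq_left hxy, nu_real hx hx1]
  simp

theorem kk_inner_eq (x : ℝ) (h : Lp ℝ 2 nu) : ⟪kk x, h⟫ = ∫ t in Set.Iic (max x 0), h t ∂nu := by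
  unfold kk
  exact L2.inner_indicatorConstLp_one _ _ _

theorem lp_int (h : Lp ℝ 2 nu) : Integrable h nu :=
  (Lp.memLp h).integrable (by norm_num)

theorem nu_setInt {h : ℝ → ℝ} (hi : Integrable h nu) {x : ℝ} (hx : 0 ≤ x) (hx1 : x ≤ 1) :
    ∫ t in Set.Iic (max x 0), h t ∂nu = h 0 + ∫ t in (0:ℝ)..x, h t := by
  rw [max_eq_left hx]
  unfold nu at *
  rw [Measure.restrict_add, integral_add_measure]
  · rw [Measure.restrict_restrict measurableSet_Iic, intervalIntegral.integral_of_le hx]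
    have : Set.Iic x ∩ Set.Ioc 0 1 = Set.Ioc 0 x := by
      ext t; simp; constructor
      · rintro ⟨h1, h2, h3⟩; exact ⟨h2, h1⟩
      · rintro ⟨h1, h2⟩; exact ⟨h2, h1, h2.trans hx1⟩
    rw [this]
    congr 1
    classical
    rw [setIntegral_dirac, if_pos (by simpa using hx)]
  · exact hi.left_of_add_measure.mono_measure Measure.restrict_le_self
  · exact hi.right_of_add_measure.mono_measure Measure.restrict_le_self

theorem kk_norm_le (x : ℝ) : ‖kk x‖ ≤ Real.sqrt (nu.real Set.univ) := by
  unfold kk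
  rw [norm_indicatorConstLp (by norm_num) (by norm_num), Real.sqrt_eq_rpow]
  simp only [norm_one, one_mul]
  have : (1:ℝ) / ENNReal.toReal 2 = 1 / 2 := by norm_num
  rw [this]
  apply Real.rpow_le_rpow measureReal_nonneg _ (by norm_num)
  exact measureReal_mono (Set.subset_univ _)

theorem kk_sub_le {x y : ℝ} (h : x ≤ y) : ‖kk y - kk x‖ ≤ Real.sqrt (y - x) := by
  have hxy : max x 0 ≤ max y 0 := max_le_max_right 0 h
  have h1 : kk y = kk x + indicatorConstLp 2
      (measurableSet_Ioc : MeasurableSet (Set.Ioc (max x 0) (max y 0))) (measure_ne_top _ _) (1 : ℝ) := by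
    unfold kk
    rw [← indicatorConstLp_disjoint_union]
    · congr 1
      rw [Set.Iic_union_Ioc_eq_Iic hxy]
    · exact Set.disjoint_left.2 fun t ht ht' => not_lt.2 ht ht'.1
  rw [h1, add_sub_cancel_left, norm_indicatorConstLp (by norm_num) (by norm_num), Real.sqrt_eq_rpow]
  simp only [norm_one, one_mul]
  have : (1:ℝ) / ENNReal.toReal 2 = 1 / 2 := by norm_num
  rw [this]
  apply Real.rpow_le_rpow measureReal_nonneg _ (by norm_num)
  rw [measureReal_def]
  apply ENNReal.toReal_le_of_le_ofReal (by linarith)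
  unfold nu
  rw [Measure.add_apply, Measure.dirac_apply' _ measurableSet_Ioc]
  have h0 : (0:ℝ) ∉ Set.Ioc (max x 0) (max y 0) := by simp
  rw [Set.indicator_of_notMem h0, zero_add]
  refine (Measure.restrict_apply_le _ _).trans ?_
  rw [Real.volume_Ioc]
  apply ENNReal.ofReal_le_ofReal
  rcases le_total x 0 with hx | hx <;> rcases le_total y 0 with hy | hy <;>
    simp [hx, hy] <;> linarith

theorem kk_cont : Continuous kk := by
  rw [Metric.continuous_iff]
  intro x ε hε
  refine ⟨ε ^ 2, by positivity, fun y hy => ?_⟩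
  have : dist (kk y) (kk x) ≤ Real.sqrt |y - x| := by
    rcases le_total x y with h | h
    · rw [dist_eq_norm, abs_of_nonneg (sub_nonneg.2 h)]
      exact kk_sub_le h
    · rw [dist_comm, dist_eq_norm, abs_of_nonpos (sub_nonpos.2 h), neg_sub]
      exact kk_sub_le h
  refine this.trans_lt ?_
  rw [Real.sqrt_lt' hε]
  exact hy

theorem kk_memLp (μ : Measure ℝ) [IsFiniteMeasure μ] : MemLp kk 2 μ :=
  MemLp.of_bound kk_cont.aestronglyMeasurable _ (Filter.Eventually.of_forall kk_norm_le)

noncomputable def JK (μ : Measure ℝ) [IsFiniteMeasure μ] : Lp ℝ 2 nu →L[ℝ] Lp ℝ 2 μ :=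
  JJ μ (kk_memLp μ).toLp

theorem JK_coe (μ : Measure ℝ) [IsFiniteMeasure μ] (h : Lp ℝ 2 nu) :
    JK μ h =ᵐ[μ] fun x => ⟪kk x, h⟫ := by
  have h1 := JJ_coe μ ((kk_memLp μ).toLp) h
  filter_upwards [h1, (kk_memLp μ).coeFn_toLp] with x a1 a2
  rw [JK, a1, a2]

theorem JK_compact (μ : Measure ℝ) [IsFiniteMeasure μ] : IsCompactOperator (JK μ) :=
  JJ_compact _ _

theorem JK_inner (μ : Measure ℝ) [IsFiniteMeasure μ] (f : Lp ℝ 2 μ) (z : Lp ℝ 2 nu) :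
    ⟪f, JK μ z⟫ = ∫ s, f s * ⟪kk s, z⟫ ∂μ := by
  rw [L2.inner_def]
  refine integral_congr_ae ?_
  filter_upwards [JK_coe μ z] with s hs
  rw [hs]
  simp [mul_comm]

theorem ev_cont (h : Lp ℝ 2 nu) : Continuous fun x => ⟪kk x, h⟫ :=
  kk_cont.inner continuous_const

end Concrete

section Concrete2

open scoped RealInnerProductSpace

/-- Standing facts on the weight measure. -/
structure GoodM (μ : Measure ℝ) : Prop where
  prob : IsProbabilityMeasure μ
  supp : ∀ᵐ s ∂μ, s ∈ Set.Icc (0:ℝ) 1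
  atom : ∀ x, μ {x} = 0

theorem goodM_of {P : ℝ → ℝ} (hPc : ContinuousOn P (Set.Icc 0 1)) (hP0 : P 0 = 0) (hP1 : P 1 = 1)
    (hPm : MonotoneOn P (Set.Icc 0 1)) (μ : Measure ℝ)
    (hμ : ∀ x ∈ Set.Icc (0 : ℝ) 1, μ (Set.Icc 0 x) = ENNReal.ofReal (P x))
    (hμc : μ (Set.Icc (0 : ℝ) 1)ᶜ = 0) : GoodM μ := by
  have hpr : IsProbabilityMeasure μ := by
    constructor
    rw [← measure_add_measure_compl (measurableSet_Icc : MeasurableSet (Set.Icc (0:ℝ) 1)), hμc,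
      hμ 1 (by simp), hP1]
    simp
  refine ⟨hpr, ?_, ?_⟩
  · rw [ae_iff]; exact hμc
  · intro x
    by_cases hx : x ∈ Set.Icc (0:ℝ) 1
    · rcases eq_or_lt_of_le hx.1 with h0 | h0
      · subst h0
        have := hμ 0 (by simp)
        rw [hP0] at this
        simpa using this
      · have hb : ∀ y ∈ Set.Ioo 0 x, μ.real {x} ≤ P x - P y := by
          intro y hy
          have hyI : y ∈ Set.Icc (0:ℝ) 1 := ⟨hy.1.le, hy.2.le.trans hx.2⟩
          have h1 : μ.real (Set.Icc 0 y ∪ {x}) = μ.real (Set.Icc 0 y) + μ.real {x} := by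
            apply measureReal_union _ (measurableSet_singleton x)
            rw [Set.disjoint_singleton_right]
            intro h; exact absurd h.2 (not_le.2 hy.2)
          have h2 : μ.real (Set.Icc 0 y ∪ {x}) ≤ μ.real (Set.Icc 0 x) := by
            refine measureReal_mono ?_ (measure_ne_top _ _)
            rintro t (ht | ht)
            · exact ⟨ht.1, ht.2.trans hy.2.le⟩
            · rw [ht]; exact ⟨h0.le, le_rfl⟩
          have e : ∀ z ∈ Set.Icc (0:ℝ) 1, μ.real (Set.Icc 0 z) = P z := by
            intro z hz
            rw [measureReal_def, hμ z hz, ENNReal.toReal_ofReal]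
            rw [← hP0]
            exact hPm (by simp) hz hz.1
          rw [e y hyI] at h1
          rw [h1, e x hx] at h2
          linarith
        have hlim : Filter.Tendsto (fun y => P x - P y) (nhdsWithin x (Set.Ioo 0 x)) (nhds (P x - P x)) := by
          refine Filter.Tendsto.sub tendsto_const_nhds ?_
          exact (hPc x hx).mono_left (nhdsWithin_mono _ fun t ht => ⟨ht.1.le, ht.2.le.trans hx.2⟩)
        have : (nhdsWithin x (Set.Ioo 0 x)).NeBot := right_nhdsWithin_Ioo_neBot h0
        have h7 := ge_of_tendsto hlim (Filter.eventually_of_mem self_mem_nhdsWithin hb)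
        have h8 : μ.real {x} = 0 := le_antisymm (by linarith) measureReal_nonneg
        rwa [measureReal_eq_zero_iff] at h8
    · exact measure_mono_null (by simpa using hx) hμc

noncomputable def phi (μ : Measure ℝ) (f : ℝ → ℝ) (t : ℝ) : ℝ := ∫ s in (0:ℝ)..t, f s ∂μ

theorem phi_Icc {μ : Measure ℝ} (hμ : GoodM μ) (f : ℝ → ℝ) {t : ℝ} (ht : 0 ≤ t) :
    phi μ f t = ∫ s in Set.Icc 0 t, f s ∂μ := by
  have : NullSingletonClass μ := ⟨hμ.atom⟩
  rw [phi, intervalIntegral.integral_of_le ht, integral_Icc_eq_integral_Ioc]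

theorem phi_cont {μ : Measure ℝ} (hμ : GoodM μ) {f : ℝ → ℝ} (hf : Integrable f μ) :
    Continuous (phi μ f) := by
  have : NullSingletonClass μ := ⟨hμ.atom⟩
  exact intervalIntegral.continuous_primitive (fun a b => hf.intervalIntegrable) 0

theorem G_memLp {μ : Measure ℝ} (hμ : GoodM μ) {f : ℝ → ℝ} (hf : Integrable f μ) :
    MemLp (fun t => (∫ s, f s ∂μ) - phi μ f t) 2 nu := by
  refine MemLp.of_bound (continuous_const.sub (phi_cont hμ hf)).aestronglyMeasurable
    (‖∫ s, f s ∂μ‖ + ∫ s, ‖f s‖ ∂μ) (Filter.Eventually.of_forall fun t => ?_)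
  refine (norm_sub_le _ _).trans ?_
  gcongr
  refine (intervalIntegral.norm_integral_le_integral_norm_uIoc).trans ?_
  exact setIntegral_le_integral hf.norm (Filter.Eventually.of_forall fun t => norm_nonneg _)

theorem tail_eq {μ : Measure ℝ} (hμ : GoodM μ) {f : ℝ → ℝ} (hf : Integrable f μ) {t : ℝ}
    (ht : 0 ≤ t) : ∫ s, (if t ≤ max s 0 then f s else 0) ∂μ = (∫ s, f s ∂μ) - phi μ f t := by
  have : NullSingletonClass μ := ⟨hμ.atom⟩
  rw [phi_Icc hμ f ht, ← integral_indicator measurableSet_Icc, ← integral_sub hf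
    (hf.indicator measurableSet_Icc)]
  refine integral_congr_ae ?_
  have h1 : ∀ᵐ s ∂μ, s ≠ t := by rw [ae_iff]; simp
  have h2 : ∀ᵐ s ∂μ, s ≠ 0 := by rw [ae_iff]; simp
  filter_upwards [h1, h2, hμ.supp] with s a1 a2 a3
  rw [max_eq_left a3.1]
  by_cases h : t ≤ s
  · have : s ∉ Set.Icc 0 t := fun h' => a1 (le_antisymm h'.2 h)
    simp [h, this]
  · have : s ∈ Set.Icc 0 t := ⟨a3.1, (not_le.1 h).le⟩
    simp [h, this]

theorem fub {μ : Measure ℝ} (hμ : GoodM μ) {f : ℝ → ℝ} (hf : Integrable f μ) (z : Lp ℝ 2 nu) :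
    ∫ s, f s * ⟪kk s, z⟫ ∂μ = ∫ t, z t * ((∫ s, f s ∂μ) - phi μ f t) ∂nu := by
  have := hμ.prob
  have h1 : ∀ s, f s * ⟪kk s, z⟫ = ∫ t, (if t ≤ max s 0 then f s * z t else 0) ∂nu := by
    intro s
    rw [kk_inner_eq, ← integral_indicator measurableSet_Iic, ← integral_const_mul]
    congr 1; ext t
    by_cases h : t ≤ max s 0 <;> simp [Set.indicator, h]
  simp_rw [h1]
  have hint : Integrable (Function.uncurry fun s t => if t ≤ max s 0 then f s * z t else 0)
      (μ.prod nu) := by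
    have h2 : MeasurableSet {p : ℝ × ℝ | p.2 ≤ max p.1 0} :=
      measurableSet_le measurable_snd (measurable_fst.max measurable_const)
    have h3 := (hf.mul_prod (lp_int z)).indicator h2
    refine h3.congr (Filter.Eventually.of_forall fun p => ?_)
    simp [Set.indicator, Function.uncurry]
  rw [integral_integral_swap hint]
  refine integral_congr_ae ?_
  have : ∀ᵐ t ∂nu, 0 ≤ t := by
    rw [nu_ae]
    refine ⟨le_rfl, ?_⟩
    filter_upwards [ae_restrict_mem measurableSet_Ioc] with t ht using ht.1.le
  filter_upwards [this] with t ht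
  rw [← tail_eq hμ hf ht, ← integral_const_mul]
  congr 1; ext s
  split_ifs <;> ring

theorem ev_int {μ : Measure ℝ} (hμ : GoodM μ) (h : Lp ℝ 2 nu) :
    Integrable (fun x => ⟪kk x, h⟫) μ := by
  have := hμ.prob
  refine Integrable.of_bound (ev_cont h).aestronglyMeasurable
    (Real.sqrt (nu.real Set.univ) * ‖h‖) (Filter.Eventually.of_forall fun x => ?_)
  refine (norm_inner_le_norm _ _).trans ?_
  gcongr
  exact kk_norm_le x

theorem JJ_G {μ : Measure ℝ} [IsFiniteMeasure μ] (hμ : GoodM μ) (y z : Lp ℝ 2 nu) :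
    ⟪JK μ y, JK μ z⟫ = ⟪(G_memLp hμ (ev_int hμ y)).toLp, z⟫ := by
  rw [JK_inner]
  have : ∫ s, JK μ y s * ⟪kk s, z⟫ ∂μ = ∫ s, ⟪kk s, y⟫ * ⟪kk s, z⟫ ∂μ := by
    refine integral_congr_ae ?_
    filter_upwards [JK_coe μ y] with s hs
    rw [hs]
  rw [this, fub hμ (ev_int hμ y), L2.inner_def]
  refine integral_congr_ae ?_
  filter_upwards [(G_memLp hμ (ev_int hμ y)).coeFn_toLp] with s hs
  rw [hs]
  simp

noncomputable def AA (γ₀ γ₁ : ℝ) : Lp ℝ 2 nu →L[ℝ] Lp ℝ 2 nu :=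
  ContinuousLinearMap.id ℝ _ + (γ₀ - 1) • (innerSL ℝ (kk 0)).smulRight (kk 0)
    + γ₁ • (innerSL ℝ (kk 1)).smulRight (kk 1)

theorem AA_apply (γ₀ γ₁ : ℝ) (y : Lp ℝ 2 nu) :
    AA γ₀ γ₁ y = y + (γ₀ - 1) • (⟪kk 0, y⟫ • kk 0) + γ₁ • (⟪kk 1, y⟫ • kk 1) := rfl

theorem AA_inner (γ₀ γ₁ : ℝ) (y z : Lp ℝ 2 nu) :
    ⟪AA γ₀ γ₁ y, z⟫ = ⟪y, z⟫ + (γ₀ - 1) * (⟪kk 0, y⟫ * ⟪kk 0, z⟫) + γ₁ * (⟪kk 1, y⟫ * ⟪kk 1, z⟫) := by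
  rw [AA_apply]
  simp only [inner_add_left, real_inner_smul_left]

theorem ev_eq (y : Lp ℝ 2 nu) {x : ℝ} (hx : 0 ≤ x) (hx1 : x ≤ 1) :
    ⟪kk x, y⟫ = y 0 + ∫ t in (0:ℝ)..x, y t := by
  rw [kk_inner_eq, nu_setInt (lp_int y) hx hx1]

theorem ev_zero (y : Lp ℝ 2 nu) : ⟪kk 0, y⟫ = y 0 := by
  rw [ev_eq y le_rfl zero_le_one]; simp

theorem kk_coe (x : ℝ) : ∀ᵐ t ∂nu, kk x t = if t ≤ max x 0 then 1 else 0 := by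
  filter_upwards [indicatorConstLp_coeFn (p := 2) (μ := nu)
    (hs := (measurableSet_Iic : MeasurableSet (Set.Iic (max x 0)))) (hμs := measure_ne_top _ _)
    (c := (1:ℝ))] with t ht
  rw [kk, ht]
  simp [Set.indicator]

theorem weak_iff {μ : Measure ℝ} [IsFiniteMeasure μ] (hμ : GoodM μ) (γ₀ γ₁ lam : ℝ) (y : Lp ℝ 2 nu) :
    (∀ z, ⟪AA γ₀ γ₁ y, z⟫ = lam * ⟪JK μ y, JK μ z⟫) ↔
    γ₀ * ⟪kk 0, y⟫ + γ₁ * ⟪kk 1, y⟫ = lam * ∫ s, ⟪kk s, y⟫ ∂μ ∧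
    ∀ᵐ t ∂(volume.restrict (Set.Ioc (0:ℝ) 1)),
      y t = γ₀ * ⟪kk 0, y⟫ - lam * phi μ (fun s => ⟪kk s, y⟫) t := by
  have h1 : (∀ z, ⟪AA γ₀ γ₁ y, z⟫ = lam * ⟪JK μ y, JK μ z⟫) ↔
      AA γ₀ γ₁ y = lam • (G_memLp hμ (ev_int hμ y)).toLp := by
    constructor
    · intro h
      refine ext_inner_right ℝ fun z => ?_
      rw [h z, JJ_G hμ, real_inner_smul_left]
    · intro h z
      rw [h, JJ_G hμ, real_inner_smul_left]
  have hL : ∀ᵐ t ∂nu, AA γ₀ γ₁ y t = y t + (γ₀ - 1) * (⟪kk 0, y⟫ * if t ≤ 0 then 1 else 0)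
      + γ₁ * (⟪kk 1, y⟫ * if t ≤ 1 then 1 else 0) := by
    rw [AA_apply]
    filter_upwards [kk_coe 0, kk_coe 1, Lp.coeFn_add (y + (γ₀ - 1) • (⟪kk 0, y⟫ • kk 0))
      (γ₁ • (⟪kk 1, y⟫ • kk 1)), Lp.coeFn_add y ((γ₀ - 1) • (⟪kk 0, y⟫ • kk 0)),
      Lp.coeFn_smul (γ₀ - 1) (⟪kk 0, y⟫ • kk 0), Lp.coeFn_smul γ₁ (⟪kk 1, y⟫ • kk 1),
      Lp.coeFn_smul (⟪kk 0, y⟫) (kk 0), Lp.coeFn_smul (⟪kk 1, y⟫) (kk 1)]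
      with t a1 a2 a3 a4 a5 a6 a7 a8
    rw [a3, Pi.add_apply, a4, Pi.add_apply, a5, a6, Pi.smul_apply, Pi.smul_apply, a7, a8,
      Pi.smul_apply, Pi.smul_apply, a1, a2]
    simp
  have hR : ∀ᵐ t ∂nu, (lam • (G_memLp hμ (ev_int hμ y)).toLp) t =
      lam * ((∫ s, ⟪kk s, y⟫ ∂μ) - phi μ (fun s => ⟪kk s, y⟫) t) := by
    filter_upwards [Lp.coeFn_smul lam (G_memLp hμ (ev_int hμ y)).toLp,
      (G_memLp hμ (ev_int hμ y)).coeFn_toLp] with t a1 a2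
    rw [a1, Pi.smul_apply, a2, smul_eq_mul]
  have h2 : (AA γ₀ γ₁ y = lam • (G_memLp hμ (ev_int hμ y)).toLp) ↔ ∀ᵐ t ∂nu,
      y t + (γ₀ - 1) * (⟪kk 0, y⟫ * if t ≤ 0 then 1 else 0)
      + γ₁ * (⟪kk 1, y⟫ * if t ≤ 1 then 1 else 0) =
      lam * ((∫ s, ⟪kk s, y⟫ ∂μ) - phi μ (fun s => ⟪kk s, y⟫) t) := by
    constructor
    · intro h
      filter_upwards [hL, hR] with t a1 a2
      rw [← a1, ← a2, h]
    · intro h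
      apply Lp.ext
      filter_upwards [hL, hR, h] with t a1 a2 a3
      rw [a1, a2, a3]
  have hp0 : phi μ (fun s => ⟪kk s, y⟫) 0 = 0 := by simp [phi]
  rw [h1, h2, nu_ae, hp0, ← ev_zero]
  simp only [le_refl, if_true, zero_le_one, mul_one, sub_zero]
  have h3 : (⟪kk 0, y⟫ + (γ₀ - 1) * ⟪kk 0, y⟫ + γ₁ * ⟪kk 1, y⟫ = lam * ∫ s, ⟪kk s, y⟫ ∂μ) ↔
     γ₀ * ⟪kk 0, y⟫ + γ₁ * ⟪kk 1, y⟫ = lam * ∫ s, ⟪kk s, y⟫ ∂μ := by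
    constructor <;> intro h <;> linarith
  rw [h3]
  refine and_congr_right fun h4 => ?_
  constructor <;> intro h <;> filter_upwards [h, ae_restrict_mem measurableSet_Ioc] with t a1 a2
  · rw [if_neg (not_le.2 a2.1), if_pos a2.2] at a1
    linarith
  · rw [if_neg (not_le.2 a2.1), if_pos a2.2, a1]
    linarith

end Concrete2

section Concrete3

open scoped RealInnerProductSpace

theorem exists_H (c : ℝ) {g : ℝ → ℝ} (hg : ContinuousOn g (Set.Icc 0 1)) :
    ∃ h : Lp ℝ 2 nu, h 0 = c ∧ (∀ᵐ t ∂(volume.restrict (Set.Ioc (0:ℝ) 1)), h t = g t) ∧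
      ∀ x ∈ Set.Icc (0:ℝ) 1, ⟪kk x, h⟫ = c + ∫ t in (0:ℝ)..x, g t := by
  set g' : ℝ → ℝ := Set.IccExtend (zero_le_one : (0:ℝ) ≤ 1) (Set.domRestrict (Set.Icc 0 1) g) with hg'
  have hc : Continuous g' := by
    rw [hg', continuous_IccExtend_iff]
    exact hg.domRestrict
  have he : ∀ t ∈ Set.Icc (0:ℝ) 1, g' t = g t := by
    intro t ht
    rw [hg', Set.IccExtend_of_mem _ _ ht]; rfl
  obtain ⟨M, hM⟩ := isCompact_Icc.exists_bound_of_continuousOn hg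
  have hM' : ∀ t, ‖g' t‖ ≤ M := by
    intro t
    rw [hg', Set.IccExtend_apply]
    exact hM _ (Set.projIcc 0 1 zero_le_one t).2
  have hmem : MemLp (fun t : ℝ => if t ≤ 0 then c else g' t) 2 nu := by
    refine MemLp.of_bound (Measurable.aestronglyMeasurable ?_) (max |c| M)
      (Filter.Eventually.of_forall fun t => ?_)
    · exact Measurable.ite measurableSet_Iic measurable_const hc.measurable
    · split_ifs
      · exact le_max_left _ _
      · exact (hM' t).trans (le_max_right _ _)
  have hco := hmem.coeFn_toLp
  rw [Filter.EventuallyEq, nu_ae] at hco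
  have h0 : (hmem.toLp : ℝ → ℝ) 0 = c := by rw [hco.1]; simp
  have h1 : ∀ᵐ t ∂(volume.restrict (Set.Ioc (0:ℝ) 1)), (hmem.toLp : ℝ → ℝ) t = g t := by
    filter_upwards [hco.2, ae_restrict_mem measurableSet_Ioc] with t a1 a2
    rw [a1, if_neg (not_le.2 a2.1), he t ⟨a2.1.le, a2.2⟩]
  refine ⟨hmem.toLp, h0, h1, fun x hx => ?_⟩
  rw [ev_eq _ hx.1 hx.2, h0]
  congr 1
  refine intervalIntegral.integral_congr_ae ?_
  rw [ae_restrict_iff' measurableSet_Ioc] at h1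
  filter_upwards [h1] with t ht hts
  rw [Set.uIoc_of_le hx.1] at hts
  exact ht ⟨hts.1, hts.2.trans hx.2⟩

theorem weak_simple {μ : Measure ℝ} [IsFiniteMeasure μ] (hμ : GoodM μ) {γ₀ γ₁ lam : ℝ} {y : Lp ℝ 2 nu}
    (hw : ∀ z, ⟪AA γ₀ γ₁ y, z⟫ = lam * ⟪JK μ y, JK μ z⟫) (h0 : ⟪kk 0, y⟫ = 0) : y = 0 := by
  have := hμ.prob
  obtain ⟨-, h2⟩ := (weak_iff hμ γ₀ γ₁ lam y).1 hw
  set g : ℝ → ℝ := fun t => - (lam * phi μ (fun s => ⟪kk s, y⟫) t) with hg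
  have hgc : Continuous g := (continuous_const.mul (phi_cont hμ (ev_int hμ y))).neg
  have h2' : ∀ᵐ t ∂(volume.restrict (Set.Ioc (0:ℝ) 1)), y t = g t := by
    filter_upwards [h2] with t ht
    rw [ht, h0, hg]; simp
  have hY : ∀ x ∈ Set.Icc (0:ℝ) 1, ⟪kk x, y⟫ = ∫ t in (0:ℝ)..x, g t := by
    intro x hx
    rw [ev_eq y hx.1 hx.2, ← ev_zero, h0, zero_add]
    refine intervalIntegral.integral_congr_ae ?_
    rw [ae_restrict_iff' measurableSet_Ioc] at h2'
    filter_upwards [h2'] with t ht hts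
    rw [Set.uIoc_of_le hx.1] at hts
    exact ht ⟨hts.1, hts.2.trans hx.2⟩
  set G : ℝ → ℝ := fun x => ∫ t in (0:ℝ)..x, |g t| with hG
  have hGd : ∀ x, HasDerivAt G |g x| x := fun x =>
    intervalIntegral.integral_hasDerivAt_right (hgc.abs.intervalIntegrable _ _)
      (hgc.abs.stronglyMeasurableAtFilter _ _) hgc.abs.continuousAt
  have hGm : Monotone G := monotone_of_deriv_nonneg (fun x => (hGd x).differentiableAt)
    (fun x => by rw [(hGd x).deriv]; exact abs_nonneg _)
  have hG0 : G 0 = 0 := by simp [hG]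
  have hYG : ∀ x ∈ Set.Icc (0:ℝ) 1, |⟪kk x, y⟫| ≤ G x := by
    intro x hx
    rw [hY x hx]
    exact intervalIntegral.abs_integral_le_integral_abs hx.1
  have hgG : ∀ x ∈ Set.Icc (0:ℝ) 1, |g x| ≤ |lam| * G x := by
    intro x hx
    rw [hg]
    simp only
    rw [abs_neg, abs_mul]
    gcongr
    rw [phi_Icc hμ _ hx.1]
    have hGx : 0 ≤ G x := by rw [← hG0]; exact hGm hx.1
    have := norm_setIntegral_le_of_norm_le_const (μ := μ) (s := Set.Icc 0 x) (f := fun s => ⟪kk s, y⟫)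
      (C := G x) (measure_lt_top _ _) (fun s hs =>
        (hYG s ⟨hs.1, hs.2.trans hx.2⟩).trans (hGm hs.2))
    refine this.trans ?_
    have h1 : μ.real (Set.Icc 0 x) ≤ 1 := measureReal_le_one
    nlinarith
  have hGz : ∀ x ∈ Set.Icc (0:ℝ) 1, G x = 0 := by
    refine eq_zero_of_abs_deriv_le_mul_abs_self_of_eq_zero_right (K := |lam|)
      (fun x _ => (hGd x).continuousAt.continuousWithinAt)
      (fun x _ => (hGd x).hasDerivWithinAt) hG0 ?_
    intro x hx
    have hGx : 0 ≤ G x := by rw [← hG0]; exact hGm hx.1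
    rw [Real.norm_eq_abs, Real.norm_eq_abs, abs_abs, abs_of_nonneg hGx]
    exact hgG x ⟨hx.1, hx.2.le⟩
  apply Lp.ext
  have : ∀ᵐ t ∂nu, y t = 0 := by
    rw [nu_ae, ← ev_zero]
    refine ⟨h0, ?_⟩
    filter_upwards [h2', ae_restrict_mem measurableSet_Ioc] with t a1 a2
    have h3 := hgG t ⟨a2.1.le, a2.2⟩
    rw [hGz t ⟨a2.1.le, a2.2⟩, mul_zero] at h3
    rw [a1]
    exact abs_eq_zero.1 (le_antisymm h3 (abs_nonneg _))
  filter_upwards [this, Lp.coeFn_zero ℝ 2 nu] with t a1 a2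
  rw [a1, a2]; rfl

theorem phi_one {μ : Measure ℝ} (hμ : GoodM μ) (f : ℝ → ℝ) : phi μ f 1 = ∫ s, f s ∂μ := by
  rw [phi_Icc hμ f zero_le_one]
  rw [Measure.restrict_eq_self_of_ae_mem hμ.supp]

theorem eigen_iff {μ : Measure ℝ} [IsFiniteMeasure μ] (hμ : GoodM μ) (γ₀ γ₁ lam : ℝ) :
    IsEigen μ γ₀ γ₁ lam ↔
      ∃ y : Lp ℝ 2 nu, y ≠ 0 ∧ ∀ z, ⟪AA γ₀ γ₁ y, z⟫ = lam * ⟪JK μ y, JK μ z⟫ := by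
  constructor
  · rintro ⟨y, g, hy, hg, ⟨x₀, hx₀, hne⟩, h1, h2, h3, h4⟩
    obtain ⟨h, hh0, hhg, hhx⟩ := exists_H (y 0) hg
    have hY : ∀ x ∈ Set.Icc (0:ℝ) 1, ⟪kk x, h⟫ = y x := by
      intro x hx; rw [hhx x hx, h1 x hx]; 
    have hphi : ∀ t ∈ Set.Icc (0:ℝ) 1, phi μ (fun s => ⟪kk s, h⟫) t = ∫ s in Set.Icc 0 t, y s ∂μ := by
      intro t ht
      rw [phi_Icc hμ _ ht.1]
      exact setIntegral_congr_fun measurableSet_Icc fun s hs => hY s ⟨hs.1, hs.2.trans ht.2⟩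
    refine ⟨h, ?_, ?_⟩
    · rintro rfl
      apply hne
      rw [← hY x₀ hx₀, inner_zero_right]
    · rw [weak_iff hμ]
      constructor
      · rw [← phi_one hμ, hphi 1 (by simp), hY 0 (by simp), hY 1 (by simp)]
        have := h2 1 (by simp)
        linarith
      · filter_upwards [hhg, ae_restrict_mem measurableSet_Ioc] with t a1 a2
        rw [a1, hphi t ⟨a2.1.le, a2.2⟩, hY 0 (by simp), h2 t ⟨a2.1.le, a2.2⟩]
        linarith
  · rintro ⟨y, hy, hw⟩
    obtain ⟨h1, h2⟩ := (weak_iff hμ γ₀ γ₁ lam y).1 hw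
    refine ⟨fun x => ⟪kk x, y⟫, fun t => γ₀ * ⟪kk 0, y⟫ - lam * phi μ (fun s => ⟪kk s, y⟫) t,
      (ev_cont y).continuousOn,
      (continuous_const.sub (continuous_const.mul (phi_cont hμ (ev_int hμ y)))).continuousOn,
      ⟨0, by simp, fun h0 => hy (weak_simple hμ hw h0)⟩, ?_, ?_, ?_, ?_⟩
    · intro x hx
      simp only
      rw [ev_eq y hx.1 hx.2, ev_zero]
      congr 1
      refine intervalIntegral.integral_congr_ae ?_
      rw [ae_restrict_iff' measurableSet_Ioc] at h2
      filter_upwards [h2] with t ht hts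
      rw [Set.uIoc_of_le hx.1] at hts
      rw [← ev_zero]
      exact ht ⟨hts.1, hts.2.trans hx.2⟩
    · intro x hx
      simp only
      rw [← phi_Icc hμ _ hx.1]
      simp [phi]
    · simp [phi]
    · simp only
      rw [phi_one hμ]
      linarith

theorem kk0_norm : ‖kk 0‖ ^ 2 = 1 := by
  rw [← real_inner_self_eq_norm_sq, kk_inner le_rfl le_rfl zero_le_one, add_zero]

theorem ev0_sq_le (y : Lp ℝ 2 nu) : ⟪kk 0, y⟫ ^ 2 ≤ ‖y‖ ^ 2 := by
  have h1 := abs_real_inner_le_norm (kk 0) y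
  have h2 : ‖kk 0‖ = 1 := by
    have := kk0_norm
    nlinarith [norm_nonneg (kk 0)]
  rw [h2, one_mul] at h1
  exact sq_le_sq' (abs_le.1 h1).1 (abs_le.1 h1).2

theorem ev_bound (y : Lp ℝ 2 nu) {x : ℝ} (hx : x ∈ Set.Icc (0:ℝ) 1) :
    ⟪kk 0, y⟫ ^ 2 ≤ 2 * ⟪kk x, y⟫ ^ 2 + 2 * (‖y‖ ^ 2 - ⟪kk 0, y⟫ ^ 2) := by
  set c := ⟪kk 0, y⟫ with hc
  have h00 : ⟪kk 0, kk 0⟫ = 1 := by rw [kk_inner le_rfl le_rfl zero_le_one, add_zero]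
  have h0x : ⟪kk 0, kk x⟫ = 1 := by rw [kk_inner le_rfl hx.1 zero_le_one, add_zero]
  have hxx : ⟪kk x, kk x⟫ = 1 + x := by rw [kk_inner hx.1 le_rfl hx.2]
  have hx0 : ⟪kk x, kk 0⟫ = 1 := by rw [real_inner_comm, h0x]
  have e1 : ⟪kk x - kk 0, y - c • kk 0⟫ = ⟪kk x, y⟫ - c := by
    rw [inner_sub_left, inner_sub_right, inner_sub_right, real_inner_smul_right,
      real_inner_smul_right, h00, hx0, ← hc]; ring
  have e2 : ‖kk x - kk 0‖ ^ 2 = x := by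
    rw [← real_inner_self_eq_norm_sq, inner_sub_left, inner_sub_right, inner_sub_right, h00, h0x,
      hx0, hxx]; ring
  have e3 : ‖y - c • kk 0‖ ^ 2 = ‖y‖ ^ 2 - c ^ 2 := by
    rw [← real_inner_self_eq_norm_sq, ← real_inner_self_eq_norm_sq, inner_sub_left, inner_sub_right,
      inner_sub_right, real_inner_smul_right, real_inner_smul_left, real_inner_smul_left,
      real_inner_smul_right, h00, real_inner_comm (kk 0) y, ← hc]; ring
  have h1 := abs_real_inner_le_norm (kk x - kk 0) (y - c • kk 0)
  rw [e1] at h1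
  have h2 : (⟪kk x, y⟫ - c) ^ 2 ≤ x * (‖y‖ ^ 2 - c ^ 2) := by
    have h5 := sq_le_sq' (abs_le.1 h1).1 (abs_le.1 h1).2
    rwa [mul_pow, e2, e3] at h5
  have h3 : 0 ≤ ‖y‖ ^ 2 - c ^ 2 := by rw [← e3]; positivity
  nlinarith [hx.1, hx.2, mul_nonneg (sub_nonneg.2 hx.2) h3, sq_nonneg (2 * ⟪kk x, y⟫ - c)]

theorem J_bound {μ : Measure ℝ} [IsFiniteMeasure μ] (hμ : GoodM μ) (y : Lp ℝ 2 nu) :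
    ⟪kk 0, y⟫ ^ 2 ≤ 2 * ‖JK μ y‖ ^ 2 + 2 * (‖y‖ ^ 2 - ⟪kk 0, y⟫ ^ 2) := by
  have := hμ.prob
  have h1 : ‖JK μ y‖ ^ 2 = ∫ s, ⟪kk s, y⟫ ^ 2 ∂μ := by
    rw [← real_inner_self_eq_norm_sq, JK_inner]
    refine integral_congr_ae ?_
    filter_upwards [JK_coe μ y] with s hs
    rw [hs, sq]
  have hi : Integrable (fun s => ⟪kk s, y⟫ ^ 2) μ := by
    refine (ev_int hμ y).bdd_mul (c := Real.sqrt (nu.real Set.univ) * ‖y‖)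
      (ev_cont y).aestronglyMeasurable (Filter.Eventually.of_forall fun x => ?_) |>.congr ?_
    · refine (norm_inner_le_norm _ _).trans ?_
      gcongr
      exact kk_norm_le x
    · exact Filter.Eventually.of_forall fun x => by simp [sq]
  have h2 : ∫ s, ⟪kk 0, y⟫ ^ 2 ∂μ ≤ ∫ s, (2 * ⟪kk s, y⟫ ^ 2 + 2 * (‖y‖ ^ 2 - ⟪kk 0, y⟫ ^ 2)) ∂μ := by
    refine integral_mono_ae (integrable_const _) ((hi.const_mul 2).add (integrable_const _)) ?_
    filter_upwards [hμ.supp] with s hs using ev_bound y hs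
  rw [integral_add (hi.const_mul 2) (integrable_const _), integral_const_mul, ← h1] at h2
  simpa using h2

theorem J_dense {μ : Measure ℝ} [IsFiniteMeasure μ] (hμ : GoodM μ) (f : Lp ℝ 2 μ)
    (hf : ∀ y, ⟪f, JK μ y⟫ = 0) : f = 0 := by
  have hfi : Integrable f μ := (Lp.memLp f).integrable (by norm_num)
  have h1 : ∀ᵐ x ∂μ, f x = 0 := by
    refine ae_eq_zero_of_integral_contDiff_smul_eq_zero hfi.locallyIntegrable ?_
    intro φ hφ hφc
    have hd : Continuous (deriv φ) := hφ.continuous_deriv (by simp)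
    obtain ⟨h, -, -, hh⟩ := exists_H (φ 0) hd.continuousOn
    have hY : ∀ x ∈ Set.Icc (0:ℝ) 1, ⟪kk x, h⟫ = φ x := by
      intro x hx
      rw [hh x hx, intervalIntegral.integral_deriv_eq_sub
        (fun t _ => (hφ.differentiable (by simp)).differentiableAt) (hd.intervalIntegrable _ _)]
      ring
    rw [← hf h, JK_inner]
    refine integral_congr_ae ?_
    filter_upwards [hμ.supp] with s hs
    rw [hY s hs, smul_eq_mul, mul_comm]
  apply Lp.ext
  filter_upwards [h1, Lp.coeFn_zero ℝ 2 μ] with t a1 a2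
  rw [a1, a2]; rfl

theorem specProb_of {μ : Measure ℝ} [IsFiniteMeasure μ] (hμ : GoodM μ) {γ₀ γ₁ : ℝ} (h0 : 0 ≤ γ₀)
    (h1 : 0 ≤ γ₁) {l : ℕ → ℝ} (hl : StrictMono l) (hr : Set.range l = {t : ℝ | IsEigen μ γ₀ γ₁ t}) :
    SpecProb (AA γ₀ γ₁) (JK μ) l where
  symm y z := by
    rw [real_inner_comm _ y, AA_inner, AA_inner, real_inner_comm]; ring
  pos y := by
    rw [AA_inner, real_inner_self_eq_norm_sq]
    nlinarith [ev0_sq_le y, mul_nonneg h0 (sq_nonneg ⟪kk 0, y⟫), mul_nonneg h1 (sq_nonneg ⟪kk 1, y⟫)]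
  coer := by
    refine ⟨1 / 3, by norm_num, fun y => ?_⟩
    rw [AA_inner, real_inner_self_eq_norm_sq]
    nlinarith [ev0_sq_le y, mul_nonneg h0 (sq_nonneg ⟪kk 0, y⟫), mul_nonneg h1 (sq_nonneg ⟪kk 1, y⟫),
      J_bound hμ y, sq_nonneg ‖JK μ y‖]
  comp := JK_compact μ
  dense := J_dense hμ
  simple := ⟨innerSL ℝ (kk 0), fun t y hw h => weak_simple hμ hw h⟩
  mono := hl
  range := by
    rw [hr]
    ext t
    exact eigen_iff hμ γ₀ γ₁ t

theorem final_main {μ : Measure ℝ} (hμ : GoodM μ)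
    (γ₀ γ₁ : ℝ) (hγ₀ : 0 ≤ γ₀) (hγ₁ : 0 ≤ γ₁)
    (lam : ℕ → ℝ) (hlam : StrictMono lam)
    (hlamrange : Set.range lam = {l : ℝ | IsEigen μ 0 0 l})
    (mu : ℕ → ℝ) (hmu : StrictMono mu)
    (hmurange : Set.range mu = {l : ℝ | IsEigen μ γ₀ γ₁ l}) :
    ∃ C : ℝ, ∀ N : ℕ, 1 ≤ N →
      ∑ n ∈ Finset.Icc 1 N, |Real.log (mu n) - Real.log (lam n)| ≤ C := by
  have := hμ.prob
  have s0 := specProb_of hμ le_rfl le_rfl hlam hlamrange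
  have s1 := specProb_of hμ hγ₀ hγ₁ hmu hmurange
  obtain ⟨h1, h2⟩ := abstract_main s0 s1 γ₀ γ₁ hγ₀ hγ₁ (kk 0) (kk 1) (fun y => by
    rw [AA_inner, AA_inner]; ring)
  exact log_of_abstract hlam (s0.nonneg 0) h1 h2

end Concrete3

theorem log_eigenvalue_series_bounded (κ : ℕ) (a b : ℝ) (hκ : 2 ≤ κ)
    (ha : 0 < a) (ha' : a < 1 / κ) (hb : b = (1 - κ * a) / (κ - 1))
    (P : ℝ → ℝ) (hP : CantorType κ a b P) (hPmono : MonotoneOn P (Set.Icc 0 1))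
    (μ : Measure ℝ)
    (hμ : ∀ x ∈ Set.Icc (0 : ℝ) 1, μ (Set.Icc 0 x) = ENNReal.ofReal (P x))
    (hμc : μ (Set.Icc (0 : ℝ) 1)ᶜ = 0)
    (γ₀ γ₁ : ℝ) (hγ₀ : 0 ≤ γ₀) (hγ₁ : 0 ≤ γ₁)
    (lam : ℕ → ℝ) (hlam : StrictMono lam)
    (hlamrange : Set.range lam = {l : ℝ | IsEigen μ 0 0 l})
    (mu : ℕ → ℝ) (hmu : StrictMono mu)
    (hmurange : Set.range mu = {l : ℝ | IsEigen μ γ₀ γ₁ l}) :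
    ∃ C : ℝ, ∀ N : ℕ, 1 ≤ N →
      ∑ n ∈ Finset.Icc 1 N, |Real.log (mu n) - Real.log (lam n)| ≤ C := by
  exact final_main (goodM_of hP.1 hP.2.1 hP.2.2.1 hPmono μ hμ hμc) γ₀ γ₁ hγ₀ hγ₁ lam hlam hlamrange
    mu hmu hmurange
end
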